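/- For n > 0 set μ = 3/n and consider the oscillatory-component equation φ''' + 3(μ−1)φ'' + (3μ²−6μ+2)φ' + μ(μ−1)(μ−2)φ + |φ|^{−n}φ = 0. There exists a number n_h with 3/2 < n_h < 9/(3+√3) = 1.9019238... such that for every n ∈ (0, n_h) this equation admits a nonconstant periodic solution of changing sign (φ of class C² with φ'' locally absolutely continuous, satisfying the equation at every s where φ(s) ≠ 0). -/

import Mathlib

open MeasureTheory intervalIntegral

/-- `φ` is a solution of the oscillatory-component equation
`φ''' + 3(μ-1)φ'' + (3μ²-6μ+2)φ' + μ(μ-1)(μ-2)φ + |φ|^{-n}φ = 0` with `μ = 3/n`: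
`φ` is `C²`, `φ''` is locally absolutely continuous (expressed via the fundamental
theorem of calculus for its a.e. derivative `φ'''`), and the equation holds wherever
`φ ≠ 0`. -/
def IsOscSol (n : ℝ) (φ : ℝ → ℝ) : Prop :=
  ContDiff ℝ 2 φ ∧
  (∀ a b : ℝ, deriv (deriv φ) b - deriv (deriv φ) a
      = ∫ s in a..b, deriv (deriv (deriv φ)) s) ∧
  (∀ s : ℝ, φ s ≠ 0 →
    deriv (deriv (deriv φ)) s + 3 * (3 / n - 1) * deriv (deriv φ) s
      + (3 * (3 / n) ^ 2 - 6 * (3 / n) + 2) * deriv φ s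
      + (3 / n) * (3 / n - 1) * (3 / n - 2) * φ s
      + |φ s| ^ (-n) * φ s = 0)

section OscHelpers

open Set Filter Topology

lemma antiper_int {τ c : ℝ} {ψ : ℝ → ℝ} (hψ : Function.Antiperiodic ψ τ)
    (hi : ∀ a b, IntervalIntegrable ψ volume a b)
    (hc : c + ∫ t in (0:ℝ)..τ, ψ t = -c) :
    Function.Antiperiodic (fun s => c + ∫ t in (0:ℝ)..s, ψ t) τ := by
  intro s
  have h1 : ∫ t in (0:ℝ)..(s+τ), ψ t = (∫ t in (0:ℝ)..τ, ψ t) + ∫ t in τ..(s+τ), ψ t :=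
    (integral_add_adjacent_intervals (hi _ _) (hi _ _)).symm
  have h2 : ∫ t in τ..(s+τ), ψ t = ∫ t in (0:ℝ)..s, ψ (t + τ) := by
    rw [intervalIntegral.integral_comp_add_right]; simp
  have h3 : ∫ t in (0:ℝ)..s, ψ (t + τ) = - ∫ t in (0:ℝ)..s, ψ t := by
    rw [← intervalIntegral.integral_neg]; congr 1; ext t; exact hψ t
  simp only
  rw [h1, h2, h3]; linarith

lemma exists_antiper {τ : ℝ} (hτ : 0 < τ) {f : ℝ → ℝ} (hf : IntervalIntegrable f volume 0 τ) :
    ∃ ψ : ℝ → ℝ, Function.Antiperiodic ψ τ ∧ (∀ a b, IntervalIntegrable ψ volume a b) ∧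
      ∀ s ∈ Ioo 0 τ, ψ s = f s := by
  let ψ : ℝ → ℝ := fun s => (-1 : ℝ) ^ ⌊s / τ⌋ * f (s - ⌊s / τ⌋ * τ)
  have hanti : Function.Antiperiodic ψ τ := by
    intro s
    have h : ⌊(s + τ) / τ⌋ = ⌊s / τ⌋ + 1 := by
      rw [add_div, div_self hτ.ne', Int.floor_add_one]
    simp only [ψ]
    rw [h, zpow_add₀ (by norm_num)]
    push_cast
    rw [show s + τ - (⌊s / τ⌋ + 1) * τ = s - ⌊s / τ⌋ * τ by ring]
    simp
  have heq : ∀ s ∈ Ioo 0 τ, ψ s = f s := by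
    intro s hs
    have h : ⌊s / τ⌋ = 0 := by
      rw [Int.floor_eq_zero_iff]
      exact ⟨(div_pos hs.1 hτ).le, (div_lt_one hτ).2 hs.2⟩
    simp [ψ, h]
  have h01 : IntervalIntegrable ψ volume 0 τ := by
    refine hf.congr_ae ?_
    rw [uIoc_of_le hτ.le, ← restrict_Ioo_eq_restrict_Ioc]
    filter_upwards [self_mem_ae_restrict measurableSet_Ioo] with s hs
    exact (heq s hs).symm
  have h12 : IntervalIntegrable ψ volume τ (2 * τ) := by
    have h := (h01.comp_sub_right τ).neg
    rw [zero_add, ← two_mul] at h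
    refine h.congr_ae (Eventually.of_forall fun s => ?_)
    have := hanti (s - τ)
    rw [sub_add_cancel] at this
    simp [this]
  refine ⟨ψ, hanti, fun a b => ?_, heq⟩
  have hp : Function.Periodic ψ (2 * τ) := hanti.periodic_two_mul
  exact hp.intervalIntegrable₀ (by positivity) (h01.trans h12) a b

lemma glue (n τ c2 c1 c0 : ℝ) (hτ : 0 < τ) (f0 f1 f2 f3 : ℝ → ℝ)
    (k0 : ContinuousOn f0 (Icc 0 τ)) (k1 : ContinuousOn f1 (Icc 0 τ))
    (k2 : ContinuousOn f2 (Icc 0 τ))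
    (d0 : ∀ s ∈ Ioo 0 τ, HasDerivAt f0 (f1 s) s)
    (d1 : ∀ s ∈ Ioo 0 τ, HasDerivAt f1 (f2 s) s)
    (d2 : ∀ s ∈ Ioo 0 τ, HasDerivAt f2 (f3 s) s)
    (hi : IntervalIntegrable f3 volume 0 τ)
    (b0 : f0 0 = 0) (b0' : f0 τ = 0) (b1 : f1 τ = - f1 0) (b2 : f2 τ = - f2 0)
    (hpos : ∀ s ∈ Ioo 0 τ, 0 < f0 s)
    (ode : ∀ s ∈ Ioo 0 τ, f3 s + c2 * f2 s + c1 * f1 s + c0 * f0 s + |f0 s| ^ (-n) * f0 s = 0) :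
    ∃ (φ : ℝ → ℝ) (T : ℝ), 0 < T ∧ (ContDiff ℝ 2 φ ∧
      (∀ a b : ℝ, deriv (deriv φ) b - deriv (deriv φ) a
        = ∫ s in a..b, deriv (deriv (deriv φ)) s) ∧
      (∀ s : ℝ, φ s ≠ 0 →
        deriv (deriv (deriv φ)) s + c2 * deriv (deriv φ) s
          + c1 * deriv φ s + c0 * φ s + |φ s| ^ (-n) * φ s = 0)) ∧ Function.Periodic φ T ∧
          (∃ s, 0 < φ s) ∧ (∃ s, φ s < 0) := by
  obtain ⟨ψ, hanti, hpint, heq⟩ := exists_antiper hτ hi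
  -- generic statement that a primitive agrees with `f`
  have key : ∀ (f f' ψ : ℝ → ℝ), ContinuousOn f (Icc 0 τ) →
      (∀ s ∈ Ioo 0 τ, HasDerivAt f (f' s) s) → (∀ a b, IntervalIntegrable ψ volume a b) →
      (∀ s ∈ Ioo 0 τ, ψ s = f' s) → ∀ s ∈ Icc 0 τ, f 0 + ∫ t in (0:ℝ)..s, ψ t = f s := by
    intro f f' ψ hf hd hi he s hs
    rw [integral_eq_sub_of_hasDerivAt_of_le hs.1 (hf.mono (Icc_subset_Icc_right hs.2))
      (fun x hx => by
        have hx' : x ∈ Ioo 0 τ := ⟨hx.1, hx.2.trans_le hs.2⟩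
        rw [he x hx']; exact hd x hx') (hi 0 s)]
    ring
  let φ2 : ℝ → ℝ := fun s => f2 0 + ∫ t in (0:ℝ)..s, ψ t
  have c2' : Continuous φ2 := continuous_const.add (continuous_primitive hpint 0)
  have e2 : ∀ s ∈ Icc 0 τ, φ2 s = f2 s := key f2 f3 ψ k2 d2 hpint heq
  have a2 : Function.Antiperiodic φ2 τ := antiper_int hanti hpint (by
    have := e2 τ (right_mem_Icc.2 hτ.le)
    simp only [φ2] at this; rw [this, b2])
  let φ1 : ℝ → ℝ := fun s => f1 0 + ∫ t in (0:ℝ)..s, φ2 t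
  have dd1 : ∀ s, HasDerivAt φ1 (φ2 s) s := fun s =>
    (integral_hasDerivAt_right (c2'.intervalIntegrable _ _)
      (c2'.stronglyMeasurableAtFilter _ _) c2'.continuousAt).const_add _
  have c1' : Continuous φ1 := continuous_iff_continuousAt.2 fun s => (dd1 s).continuousAt
  have e1 : ∀ s ∈ Icc 0 τ, φ1 s = f1 s := key f1 f2 φ2 k1 d1 c2'.intervalIntegrable
    (fun s hs => e2 s (Ioo_subset_Icc_self hs))
  have a1 : Function.Antiperiodic φ1 τ := antiper_int a2 c2'.intervalIntegrable (by
    have := e1 τ (right_mem_Icc.2 hτ.le)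
    simp only [φ1] at this; rw [this, b1])
  let φ0 : ℝ → ℝ := fun s => f0 0 + ∫ t in (0:ℝ)..s, φ1 t
  have dd0 : ∀ s, HasDerivAt φ0 (φ1 s) s := fun s =>
    (integral_hasDerivAt_right (c1'.intervalIntegrable _ _)
      (c1'.stronglyMeasurableAtFilter _ _) c1'.continuousAt).const_add _
  have e0 : ∀ s ∈ Icc 0 τ, φ0 s = f0 s := key f0 f1 φ1 k0 d0 c1'.intervalIntegrable
    (fun s hs => e1 s (Ioo_subset_Icc_self hs))
  have a0 : Function.Antiperiodic φ0 τ := antiper_int a1 c1'.intervalIntegrable (by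
    have := e0 τ (right_mem_Icc.2 hτ.le)
    simp only [φ0] at this; rw [this, b0, b0']; simp)
  have D0 : deriv φ0 = φ1 := funext fun s => (dd0 s).deriv
  have D1 : deriv φ1 = φ2 := funext fun s => (dd1 s).deriv
  -- third derivative
  let R : ℝ → ℝ := fun s => -(c2 * φ2 s + c1 * φ1 s + c0 * φ0 s + |φ0 s| ^ (-n) * φ0 s)
  have aR : Function.Antiperiodic R τ := by
    intro s
    simp only [R, a2 s, a1 s, a0 s, abs_neg]; ring
  let Q : ℝ → Prop := fun s => φ0 s ≠ 0 → HasDerivAt φ2 (R s) s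
  have hQ : Function.Periodic Q τ := by
    intro s
    simp only [Q, a0 s, aR s, ne_eq, neg_eq_zero, eq_iff_iff]
    have : HasDerivAt φ2 (-R s) (s + τ) ↔ HasDerivAt φ2 (R s) s := by
      constructor
      · intro h
        have h1 := (h.comp_add_const s τ).neg
        rw [neg_neg] at h1
        refine h1.congr_of_eventuallyEq (Eventually.of_forall fun x => ?_)
        simp [a2 x]
      · intro h
        have h0 : HasDerivAt φ2 (R s) (s + τ - τ) := by simpa using h
        have h1 := (h0.comp_sub_const (s + τ) τ).neg
        refine h1.congr_of_eventuallyEq (Eventually.of_forall fun x => ?_)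
        have := a2 (x - τ)
        rw [sub_add_cancel] at this
        simp [this]
    rw [this]
  have allQ : ∀ s, Q s := by
    intro s
    obtain ⟨y, hy, hsy⟩ := hQ.exists_mem_Ico₀ hτ s
    rw [hsy]
    intro hne
    rcases hy.1.eq_or_lt with h0 | h0
    · exfalso; apply hne; rw [← h0, e0 0 (left_mem_Icc.2 hτ.le), b0]
    · have hy' : y ∈ Ioo 0 τ := ⟨h0, hy.2⟩
      have h := d2 y hy'
      have hR : R y = f3 y := by
        have := ode y hy'
        have hc := Ioo_subset_Icc_self hy'
        simp only [R, e2 y hc, e1 y hc, e0 y hc]; linarith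
      rw [hR]
      refine h.congr_of_eventuallyEq ?_
      filter_upwards [Ioo_mem_nhds hy'.1 hy'.2] with x hx
      exact e2 x (Ioo_subset_Icc_self hx)
  have hhalf : τ / 2 ∈ Ioo 0 τ := ⟨by linarith, by linarith⟩
  have hp : 0 < φ0 (τ / 2) := by
    rw [e0 _ (Ioo_subset_Icc_self hhalf)]; exact hpos _ hhalf
  refine ⟨φ0, 2 * τ, by positivity, ⟨?_, ?_, ?_⟩, a0.periodic_two_mul, ⟨τ / 2, hp⟩,
    ⟨τ / 2 + τ, by rw [a0]; linarith⟩⟩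
  · have hh1 : ContDiff ℝ 1 φ1 := by
      rw [contDiff_one_iff_deriv]
      exact ⟨fun s => (dd1 s).differentiableAt, by rw [D1]; exact c2'⟩
    rw [show (2 : WithTop ℕ∞) = 1 + 1 by norm_num, contDiff_succ_iff_deriv]
    refine ⟨fun s => (dd0 s).differentiableAt, by simp, by rw [D0]; exact hh1⟩
  · intro a b
    rw [D0, D1]
    have hl : LocallyIntegrable ψ volume := by
      intro x
      refine ⟨Ioo (x-1) (x+1), Ioo_mem_nhds (by linarith) (by linarith), ?_⟩
      exact ((hpint (x-1) (x+1)).1).mono_set Ioo_subset_Ioc_self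
    have hae : deriv φ2 =ᵐ[volume] ψ := by
      filter_upwards [LocallyIntegrable.ae_hasDerivAt_integral hl] with x hx
      exact ((hx 0).const_add _).deriv
    rw [integral_congr_ae (g := ψ) (hae.mono fun x hx _ => hx)]
    simp only [φ2]
    rw [← integral_interval_sub_left (hpint 0 b) (hpint 0 a)]
    ring
  · intro s hs
    rw [D0, D1, (allQ s hs).deriv]
    simp only [R]; ring

/-- weight `t(1-t)` -/
noncomputable def ww (t : ℝ) : ℝ := t * (1 - t)

/-- Green kernel of `-F''' = g`, `F(0)=F(1)=0`, `θ F'(1) = -(θ+1) F'(0)`. -/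
noncomputable def KK (θ x t : ℝ) : ℝ :=
  θ * (ww x * ww t) + (x ^ 2 * (1 - t) ^ 2 - (max (x - t) 0) ^ 2) / 2

/-- A hump: `g = F^p` on `(0,1)` with `F = ∫ K g`. -/
structure Hump (p θ : ℝ) (g : ℝ → ℝ) : Prop where
  int : IntervalIntegrable g volume 0 1
  cont : ContinuousOn g (Ioo 0 1)
  pos : ∀ t ∈ Ioo (0:ℝ) 1, 0 < g t
  Fpos : ∀ x ∈ Ioo (0:ℝ) 1, 0 < ∫ t in (0:ℝ)..1, KK θ x t * g t
  eq : ∀ x ∈ Ioo (0:ℝ) 1, g x = (∫ t in (0:ℝ)..1, KK θ x t * g t) ^ p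

lemma hump_F {θ : ℝ} {g : ℝ → ℝ} (hg : IntervalIntegrable g volume 0 1) {x : ℝ}
    (hx : x ∈ Icc (0:ℝ) 1) :
    ∫ t in (0:ℝ)..1, KK θ x t * g t =
      θ * (∫ t in (0:ℝ)..1, ww t * g t) * x
      + ((∫ t in (0:ℝ)..1, (1 - t) ^ 2 * g t) - 2 * θ * (∫ t in (0:ℝ)..1, ww t * g t)) * x ^ 2 / 2
      - (x ^ 2 * (∫ t in (0:ℝ)..x, g t) - 2 * x * (∫ t in (0:ℝ)..x, t * g t)
        + ∫ t in (0:ℝ)..x, t ^ 2 * g t) / 2 := by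
  have hm : ∀ (f : ℝ → ℝ), Continuous f → ∀ a b, a ∈ Icc (0:ℝ) 1 → b ∈ Icc (0:ℝ) 1 →
      IntervalIntegrable (fun t => f t * g t) volume a b := by
    intro f hf a b ha hb
    have h1 : IntervalIntegrable g volume a b := hg.mono_set (by
      rw [uIcc_of_le zero_le_one]; exact uIcc_subset_Icc ha hb)
    exact h1.continuousOn_mul hf.continuousOn
  have h0 : (0:ℝ) ∈ Icc (0:ℝ) 1 := by simp
  have h1 : (1:ℝ) ∈ Icc (0:ℝ) 1 := by simp
  have cw : Continuous ww := by unfold ww; fun_prop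
  have hg' : IntervalIntegrable g volume 0 x := hg.mono_set (by
      rw [uIcc_of_le zero_le_one]; exact uIcc_subset_Icc h0 hx)
  have e1 : ∀ t, KK θ x t * g t = (θ * ww x) * (ww t * g t) + (x ^ 2 / 2) * ((1 - t) ^ 2 * g t)
      - (1 / 2) * ((max (x - t) 0) ^ 2 * g t) := by
    intro t; unfold KK; ring
  have i1 := hm ww cw 0 1 h0 h1
  have i2 := hm (fun t => (1 - t) ^ 2) (by fun_prop) 0 1 h0 h1
  have i3 := hm (fun t => (max (x - t) 0) ^ 2) (by fun_prop) 
  have e2 : ∫ t in (0:ℝ)..1, (max (x - t) 0) ^ 2 * g t =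
      x ^ 2 * (∫ t in (0:ℝ)..x, g t) - 2 * x * (∫ t in (0:ℝ)..x, t * g t)
        + ∫ t in (0:ℝ)..x, t ^ 2 * g t := by
    rw [← integral_add_adjacent_intervals (i3 0 x h0 hx) (i3 x 1 hx h1)]
    have z : ∫ t in x..1, (max (x - t) 0) ^ 2 * g t = ∫ t in x..1, (0:ℝ) := by
      apply integral_congr
      intro t ht
      rw [uIcc_of_le hx.2] at ht
      simp [max_eq_right (sub_nonpos.2 ht.1)]
    rw [z]
    have z2 : ∫ t in (0:ℝ)..x, (max (x - t) 0) ^ 2 * g t =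
      ∫ t in (0:ℝ)..x, (x ^ 2 * g t - (2 * x) * (t * g t) + t ^ 2 * g t) := by
      apply integral_congr
      intro t ht
      rw [uIcc_of_le hx.1] at ht
      simp only [max_eq_left (sub_nonneg.2 ht.2)]; ring
    rw [z2, intervalIntegral.integral_add, intervalIntegral.integral_sub]
    · simp only [intervalIntegral.integral_const_mul, intervalIntegral.integral_zero]; ring
    · exact hg'.const_mul _
    · exact (hm (fun t => t) continuous_id 0 x h0 hx).const_mul _
    · exact (hg'.const_mul _).sub ((hm (fun t => t) continuous_id 0 x h0 hx).const_mul _)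
    · exact hm (fun t => t ^ 2) (by fun_prop) 0 x h0 hx
  simp only [e1]
  rw [intervalIntegral.integral_sub, intervalIntegral.integral_add]
  · simp only [intervalIntegral.integral_const_mul]
    rw [e2]; unfold ww; ring
  · exact i1.const_mul _
  · exact i2.const_mul _
  · exact (i1.const_mul _).add (i2.const_mul _)
  · exact (i3 0 1 h0 h1).const_mul _

lemma hump_glue {n θ τ : ℝ} {g : ℝ → ℝ} (hn : 0 < n) (hτ : 0 < τ)
    (hg : Hump (1 - n) θ g)
    (h1 : Real.exp ((3 / n - 1) * τ) * θ = θ + 1)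
    (h2 : (∫ t in (0:ℝ)..1, g t) - ((∫ t in (0:ℝ)..1, (1 - t) ^ 2 * g t)
        - 2 * θ * (∫ t in (0:ℝ)..1, ww t * g t)) =
      Real.exp ((3 / n - 2) * τ) * ((∫ t in (0:ℝ)..1, (1 - t) ^ 2 * g t)
        - 2 * θ * (∫ t in (0:ℝ)..1, ww t * g t))) :
    ∃ (φ : ℝ → ℝ) (T : ℝ), 0 < T ∧ (ContDiff ℝ 2 φ ∧
      (∀ a b : ℝ, deriv (deriv φ) b - deriv (deriv φ) a
        = ∫ s in a..b, deriv (deriv (deriv φ)) s) ∧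
      (∀ s : ℝ, φ s ≠ 0 →
        deriv (deriv (deriv φ)) s + 3 * (3 / n - 1) * deriv (deriv φ) s
      + (3 * (3 / n) ^ 2 - 6 * (3 / n) + 2) * deriv φ s
      + (3 / n) * (3 / n - 1) * (3 / n - 2) * φ s + |φ s| ^ (-n) * φ s = 0)) ∧
        Function.Periodic φ T ∧ (∃ s, 0 < φ s) ∧ (∃ s, φ s < 0) := by
  have hF := fun x hx => hump_F (θ := θ) hg.int (x := x) hx
  set μ := 3 / n with hμ
  have hμn : μ * n = 3 := by rw [hμ]; field_simp
  set I0 := ∫ t in (0:ℝ)..1, g t with hI0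
  set I1 := ∫ t in (0:ℝ)..1, ww t * g t with hI1
  set I2 := ∫ t in (0:ℝ)..1, (1 - t) ^ 2 * g t with hI2
  set β := I2 - 2 * θ * I1 with hβ
  let M0 : ℝ → ℝ := fun x => ∫ t in (0:ℝ)..x, g t
  let M1 : ℝ → ℝ := fun x => ∫ t in (0:ℝ)..x, t * g t
  let M2 : ℝ → ℝ := fun x => ∫ t in (0:ℝ)..x, t ^ 2 * g t
  have hm : ∀ (f : ℝ → ℝ), Continuous f → IntervalIntegrable (fun t => f t * g t) volume 0 1 :=
    fun f hf => hg.int.continuousOn_mul hf.continuousOn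
  have prim : ∀ (f : ℝ → ℝ), Continuous f →
      ContinuousOn (fun x => ∫ t in (0:ℝ)..x, f t * g t) (Icc 0 1) ∧
      ∀ x ∈ Ioo (0:ℝ) 1, HasDerivAt (fun x => ∫ t in (0:ℝ)..x, f t * g t) (f x * g x) x := by
    intro f hf
    constructor
    · have := continuousOn_primitive_interval (f := fun t => f t * g t) (μ := volume)
        (a := 0) (b := 1) (by
          rw [uIcc_of_le zero_le_one, integrableOn_Icc_iff_integrableOn_Ioc]
          exact (hm f hf).1)
      rwa [uIcc_of_le zero_le_one] at this
    · intro x hx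
      have hc : ContinuousOn (fun t => f t * g t) (Ioo 0 1) := hf.continuousOn.mul hg.cont
      refine integral_hasDerivAt_right ?_ ?_ ?_
      · exact (hm f hf).mono_set (by
          rw [uIcc_of_le zero_le_one, uIcc_of_le hx.1.le]; exact Icc_subset_Icc_right hx.2.le)
      · exact hc.stronglyMeasurableAtFilter isOpen_Ioo x hx
      · exact hc.continuousAt (Ioo_mem_nhds hx.1 hx.2)
  obtain ⟨cM0, dM0⟩ := prim (fun _ => 1) continuous_const
  obtain ⟨cM1, dM1⟩ := prim (fun t => t) continuous_id
  obtain ⟨cM2, dM2⟩ := prim (fun t => t ^ 2) (by fun_prop)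
  simp only [one_mul] at cM0 dM0
  change ContinuousOn M0 _ at cM0
  change ContinuousOn M1 _ at cM1
  change ContinuousOn M2 _ at cM2
  change ∀ x ∈ Ioo (0:ℝ) 1, HasDerivAt M0 _ x at dM0
  change ∀ x ∈ Ioo (0:ℝ) 1, HasDerivAt M1 _ x at dM1
  change ∀ x ∈ Ioo (0:ℝ) 1, HasDerivAt M2 _ x at dM2
  let F0 : ℝ → ℝ := fun x => θ * I1 * x + β * x ^ 2 / 2 - (x ^ 2 * M0 x - 2 * x * M1 x + M2 x) / 2
  let F1 : ℝ → ℝ := fun x => θ * I1 + β * x - (x * M0 x - M1 x)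
  let F2 : ℝ → ℝ := fun x => β - M0 x
  have cF0 : ContinuousOn F0 (Icc 0 1) := by fun_prop
  have cF1 : ContinuousOn F1 (Icc 0 1) := by fun_prop
  have cF2 : ContinuousOn F2 (Icc 0 1) := by fun_prop
  have dF0 : ∀ x ∈ Ioo (0:ℝ) 1, HasDerivAt F0 (F1 x) x := by
    intro x hx
    have hid := hasDerivAt_id x
    have := ((hid.const_mul (θ * I1)).add (((hid.pow 2).const_mul β).div_const 2)).sub
      (((((hid.pow 2).mul (dM0 x hx)).sub ((hid.const_mul 2).mul (dM1 x hx))).add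
        (dM2 x hx)).div_const 2)
    refine this.congr_deriv ?_
    simp [F1]; ring
  have dF1 : ∀ x ∈ Ioo (0:ℝ) 1, HasDerivAt F1 (F2 x) x := by
    intro x hx
    have hid := hasDerivAt_id x
    have := ((hid.const_mul β).const_add (θ * I1)).sub ((hid.mul (dM0 x hx)).sub (dM1 x hx))
    refine this.congr_deriv ?_
    simp [F2]
  have dF2 : ∀ x ∈ Ioo (0:ℝ) 1, HasDerivAt F2 (-g x) x := by
    intro x hx
    exact (dM0 x hx).const_sub β
  -- boundary values
  have M00 : M0 0 = 0 := by simp [M0]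
  have M10 : M1 0 = 0 := by simp [M1]
  have M01 : M0 1 = I0 := rfl
  have z0 : (0:ℝ) ∈ Icc (0:ℝ) 1 := by simp
  have z1 : (1:ℝ) ∈ Icc (0:ℝ) 1 := by simp
  have hF0 : ∀ x ∈ Icc (0:ℝ) 1, F0 x = ∫ t in (0:ℝ)..1, KK θ x t * g t := fun x hx => (hF x hx).symm
  have F00 : F0 0 = 0 := by
    simp [F0, M2]
  have F01 : F0 1 = 0 := by
    rw [hF0 1 z1]
    have : ∫ t in (0:ℝ)..1, KK θ 1 t * g t = ∫ t in (0:ℝ)..1, (0:ℝ) := by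
      apply integral_congr
      intro t ht
      rw [uIcc_of_le zero_le_one] at ht
      simp [KK, ww, max_eq_left (sub_nonneg.2 ht.2)]
    rw [this]; simp
  have F10 : F1 0 = θ * I1 := by simp [F1, M10]
  have eI2 : I2 = I0 - M1 1 - I1 := by
    simp only [hI2, hI0, hI1, M1]
    rw [← intervalIntegral.integral_sub hg.int (hm (fun t => t) continuous_id), ← intervalIntegral.integral_sub]
    · congr 1; ext t; unfold ww; ring
    · exact hg.int.sub (hm (fun t => t) continuous_id)
    · exact hm ww (by unfold ww; fun_prop)
  have F11 : F1 1 = -(θ + 1) * I1 := by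
    simp only [F1, M01, hβ]; linarith
  -- the change of variables
  let s0 : ℝ := - Real.log (Real.exp τ - 1)
  have hL : 0 < Real.exp τ - 1 := by
    have := Real.add_one_lt_exp hτ.ne'; linarith
  have hs0 : Real.exp s0 * (Real.exp τ - 1) = 1 := by
    simp only [s0]; rw [Real.exp_neg, Real.exp_log hL]; field_simp
  let ξ : ℝ → ℝ := fun s => Real.exp (s + s0) - Real.exp s0
  have dξ : ∀ s, HasDerivAt ξ (Real.exp (s + s0)) s := by
    intro s
    have := (((hasDerivAt_id s).add_const s0).exp).sub_const (Real.exp s0)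
    exact this.congr_deriv (by simp)
  have cξ : Continuous ξ := by fun_prop
  have ξ0 : ξ 0 = 0 := by simp [ξ]
  have ξτ : ξ τ = 1 := by
    simp only [ξ]; rw [Real.exp_add]; linarith
  have ξmono : StrictMono ξ := by
    intro a b hab
    simp only [ξ]
    have : Real.exp (a + s0) < Real.exp (b + s0) := Real.exp_lt_exp.2 (by linarith)
    linarith
  have mIoo : ∀ s ∈ Ioo 0 τ, ξ s ∈ Ioo (0:ℝ) 1 := fun s hs =>
    ⟨by rw [← ξ0]; exact ξmono hs.1, by rw [← ξτ]; exact ξmono hs.2⟩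
  have mIcc : MapsTo ξ (Icc 0 τ) (Icc (0:ℝ) 1) := fun s hs =>
    ⟨by rw [← ξ0]; exact ξmono.monotone hs.1, by rw [← ξτ]; exact ξmono.monotone hs.2⟩
  let E : ℝ → ℝ → ℝ := fun q s => Real.exp (-q * (s + s0))
  have cE : ∀ q, Continuous (E q) := by intro q; fun_prop
  have dE : ∀ q s, HasDerivAt (E q) (-q * E q s) s := by
    intro q s
    have := ((((hasDerivAt_id s).add_const s0).const_mul (-q)).exp)
    exact this.congr_deriv (by simp [E]; ring)
  have mE : ∀ q s, E q s * Real.exp (s + s0) = E (q - 1) s := by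
    intro q s; simp only [E]; rw [← Real.exp_add]; congr 1; ring
  let A0 : ℝ → ℝ := fun s => E μ s * F0 (ξ s)
  let A1 : ℝ → ℝ := fun s => E (μ - 1) s * F1 (ξ s)
  let A2 : ℝ → ℝ := fun s => E (μ - 2) s * F2 (ξ s)
  let A3 : ℝ → ℝ := fun s => E (μ - 3) s * (-g (ξ s))
  have cA0 : ContinuousOn A0 (Icc 0 τ) := (cE μ).continuousOn.mul (cF0.comp cξ.continuousOn mIcc)
  have cA1 : ContinuousOn A1 (Icc 0 τ) := (cE _).continuousOn.mul (cF1.comp cξ.continuousOn mIcc)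
  have cA2 : ContinuousOn A2 (Icc 0 τ) := (cE _).continuousOn.mul (cF2.comp cξ.continuousOn mIcc)
  have dA0 : ∀ s ∈ Ioo 0 τ, HasDerivAt A0 (A1 s - μ * A0 s) s := by
    intro s hs
    have := (dE μ s).mul ((dF0 (ξ s) (mIoo s hs)).comp s (dξ s))
    refine this.congr_deriv ?_
    simp only [A0, A1, ← mE μ s, Function.comp]; ring
  have dA1 : ∀ s ∈ Ioo 0 τ, HasDerivAt A1 (A2 s - (μ - 1) * A1 s) s := by
    intro s hs
    have := (dE (μ - 1) s).mul ((dF1 (ξ s) (mIoo s hs)).comp s (dξ s))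
    refine this.congr_deriv ?_
    simp only [A2, A1, show μ - 2 = μ - 1 - 1 by ring, ← mE (μ - 1) s, Function.comp]; ring
  have dA2 : ∀ s ∈ Ioo 0 τ, HasDerivAt A2 (A3 s - (μ - 2) * A2 s) s := by
    intro s hs
    have := (dE (μ - 2) s).mul ((dF2 (ξ s) (mIoo s hs)).comp s (dξ s))
    refine this.congr_deriv ?_
    simp only [A2, A3, show μ - 3 = μ - 2 - 1 by ring, ← mE (μ - 2) s, Function.comp]; ring
  have iA3 : IntervalIntegrable A3 volume 0 τ := by
    have h : IntervalIntegrable (fun s => g (ξ s) * Real.exp (s + s0)) volume 0 τ := by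
      refine intervalIntegrable_deriv_of_nonneg (g := fun s => -F2 (ξ s)) ?_ ?_ ?_
      · rw [uIcc_of_le hτ.le]; exact (cF2.comp cξ.continuousOn mIcc).neg
      · intro s hs
        rw [min_eq_left hτ.le, max_eq_right hτ.le] at hs
        exact ((dF2 (ξ s) (mIoo s hs)).comp s (dξ s)).neg.congr_deriv (by ring)
      · intro s hs
        rw [min_eq_left hτ.le, max_eq_right hτ.le] at hs
        exact mul_nonneg (hg.pos _ (mIoo s hs)).le (Real.exp_pos _).le
    have h' := h.continuousOn_mul (g := fun s => - E (μ - 2) s) (cE (μ - 2)).neg.continuousOn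
    refine h'.congr_ae (Eventually.of_forall fun s => ?_)
    simp only [A3, show μ - 3 = μ - 2 - 1 by ring, ← mE (μ - 2) s]; ring
  have EE : ∀ q, E q τ = Real.exp (-q * τ) * E q 0 := by
    intro q; simp only [E]; rw [← Real.exp_add]; congr 1; ring
  have bA0 : A0 0 = 0 := by simp [A0, ξ0, F00]
  have bA0' : A0 τ = 0 := by simp [A0, ξτ, F01]
  have bA1 : A1 τ = - A1 0 := by
    simp only [A1, ξ0, ξτ, F10, F11, ← h1, EE]
    have : Real.exp (-(μ - 1) * τ) * Real.exp ((μ - 1) * τ) = 1 := by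
      rw [← Real.exp_add]; ring_nf; exact Real.exp_zero
    linear_combination (-θ * I1 * E (μ - 1) 0) * this
  have bA2 : A2 τ = - A2 0 := by
    have : Real.exp (-(μ - 2) * τ) * Real.exp ((μ - 2) * τ) = 1 := by
      rw [← Real.exp_add]; ring_nf; exact Real.exp_zero
    simp only [A2, ξ0, ξτ, F2, M01, M00, EE]
    have h2' : β - I0 = - (Real.exp ((μ - 2) * τ) * β) := by linarith
    rw [h2']
    linear_combination (-β * E (μ - 2) 0) * this
  have pF0 : ∀ x ∈ Ioo (0:ℝ) 1, 0 < F0 x := fun x hx => by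
    rw [hF0 x (Ioo_subset_Icc_self hx)]; exact hg.Fpos x hx
  have pA0 : ∀ s ∈ Ioo 0 τ, 0 < A0 s := fun s hs =>
    mul_pos (Real.exp_pos _) (pF0 _ (mIoo s hs))
  refine glue n τ _ _ _ hτ A0 (fun s => A1 s - μ * A0 s)
    (fun s => A2 s - (2 * μ - 1) * A1 s + μ ^ 2 * A0 s)
    (fun s => A3 s - (μ - 2) * A2 s - (2 * μ - 1) * (A2 s - (μ - 1) * A1 s)
      + μ ^ 2 * (A1 s - μ * A0 s)) cA0 (by fun_prop) (by fun_prop) dA0 ?_ ?_ ?_ bA0 bA0' ?_ ?_ pA0 ?_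
  · intro s hs
    refine ((dA1 s hs).sub ((dA0 s hs).const_mul μ)).congr_deriv ?_
    ring
  · intro s hs
    exact ((dA2 s hs).sub ((dA1 s hs).const_mul (2 * μ - 1))).add ((dA0 s hs).const_mul (μ ^ 2))
  · have hc : ContinuousOn (fun s => - (μ - 2) * A2 s - (2 * μ - 1) * (A2 s - (μ - 1) * A1 s)
      + μ ^ 2 * (A1 s - μ * A0 s)) (uIcc 0 τ) := by
      rw [uIcc_of_le hτ.le]; fun_prop
    refine (iA3.add hc.intervalIntegrable).congr_ae (Eventually.of_forall fun s => ?_)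
    simp only; ring
  · simp only [bA0, bA0', bA1]; ring
  · simp only [bA0, bA0', bA1, bA2]; ring
  · intro s hs
    have hp := pA0 s hs
    have e : |A0 s| ^ (-n) * A0 s = - A3 s := by
      rw [abs_of_pos hp]
      have : A0 s ^ (-n) * A0 s = A0 s ^ (1 - n) := by
        rw [sub_eq_neg_add, Real.rpow_add hp, Real.rpow_one]
      rw [this]
      simp only [A0, A3]
      rw [Real.mul_rpow (Real.exp_pos _).le (pF0 _ (mIoo s hs)).le, hg.eq _ (mIoo s hs),
        ← hF0 _ (Ioo_subset_Icc_self (mIoo s hs))]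
      have : E μ s ^ (1 - n) = E (μ - 3) s := by
        simp only [E]
        rw [← Real.exp_mul]; congr 1
        linear_combination (s + s0) * hμn
      rw [this]; ring
    rw [e]; ring

lemma ww_pos {t : ℝ} (ht : t ∈ Ioo (0:ℝ) 1) : 0 < ww t := mul_pos ht.1 (by linarith [ht.2])
lemma ww_nonneg {t : ℝ} (ht : t ∈ Icc (0:ℝ) 1) : 0 ≤ ww t := mul_nonneg ht.1 (by linarith [ht.2])
lemma ww_le_one {t : ℝ} (ht : t ∈ Icc (0:ℝ) 1) : ww t ≤ 1 := by
  unfold ww; nlinarith [ht.1, ht.2]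
lemma ww_cont : Continuous ww := by unfold ww; fun_prop

lemma KK_lower {θ x t : ℝ} (hx : x ∈ Icc (0:ℝ) 1) (ht : t ∈ Icc (0:ℝ) 1) :
    θ * (ww x * ww t) + x * ww x * ww t ^ 2 / 2 ≤ KK θ x t := by
  unfold KK
  have h : x * ww x * ww t ^ 2 ≤ x ^ 2 * (1 - t) ^ 2 - (max (x - t) 0) ^ 2 := by
    obtain ⟨hx0, hx1⟩ := hx
    obtain ⟨ht0, ht1⟩ := ht
    have a : 0 ≤ 1 - x := by linarith
    have b : 0 ≤ 1 - t := by linarith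
    unfold ww
    have hb : 0 ≤ x ^ 2 * (1 - t) ^ 2 := by positivity
    rcases le_total t x with h | h
    · rw [max_eq_left (by linarith)]
      have e : x ^ 2 * (1 - t) ^ 2 - (x - t) ^ 2 = (t * (1 - x)) * (x * (1 - t) + (x - t)) := by ring
      have e2 : x * (x * (1 - x)) * (t * (1 - t)) ^ 2
        = (t * (1 - x)) * (x * (1 - t)) * (x * t * (1 - t)) := by ring
      rw [e, e2]
      have h1 : x * t * (1 - t) ≤ 1 := by
        have : x * t ≤ 1 := by nlinarith
        nlinarith [mul_nonneg hx0 ht0]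
      have h2 : 0 ≤ (t * (1 - x)) * (x * (1 - t)) := by positivity
      have h3 : 0 ≤ (t * (1 - x)) * (x - t) := by
        apply mul_nonneg (by positivity); linarith
      nlinarith
    · rw [max_eq_right (by linarith)]
      have e2 : x * (x * (1 - x)) * (t * (1 - t)) ^ 2
        = x ^ 2 * (1 - t) ^ 2 * ((1 - x) * t ^ 2) := by ring
      rw [e2]
      have : (1 - x) * t ^ 2 ≤ 1 := by
        have : t ^ 2 ≤ 1 := by nlinarith
        nlinarith
      nlinarith
  linarith

lemma KK_upper {θ x t : ℝ} (hx : x ∈ Icc (0:ℝ) 1) (ht : t ∈ Icc (0:ℝ) 1) :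
    KK θ x t ≤ (θ + 1) * (ww x * ww t) := by
  unfold KK
  have h : x ^ 2 * (1 - t) ^ 2 - (max (x - t) 0) ^ 2 ≤ 2 * (ww x * ww t) := by
    obtain ⟨hx0, hx1⟩ := hx
    obtain ⟨ht0, ht1⟩ := ht
    have a : 0 ≤ 1 - x := by linarith
    have b : 0 ≤ 1 - t := by linarith
    unfold ww
    rcases le_total t x with h | h
    · rw [max_eq_left (by linarith)]
      have e : x ^ 2 * (1 - t) ^ 2 - (x - t) ^ 2 = (t * (1 - x)) * (2 * (x * (1 - t)) - t * (1 - x))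
        := by ring
      rw [e]
      have h3 : 0 ≤ (t * (1 - x)) * (t * (1 - x)) := by positivity
      nlinarith
    · rw [max_eq_right (by linarith)]
      have e2 : x ^ 2 * (1 - t) ^ 2 = (x * (1 - t)) * (x * (1 - t)) := by ring
      have e3 : 2 * (x * (1 - x) * (t * (1 - t))) = (x * (1 - t)) * (2 * (t * (1 - x))) := by ring
      rw [e2, e3]
      have : x * (1 - t) ≤ t * (1 - x) := by nlinarith
      have h4 : 0 ≤ t * (1 - x) := by positivity
      have : (x * (1 - t)) * (x * (1 - t)) ≤ (x * (1 - t)) * (2 * (t * (1 - x))) :=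
        mul_le_mul_of_nonneg_left (by linarith) (by positivity)
      linarith
  linarith

lemma KK_upper2 {θ x t : ℝ} (ht : t ∈ Icc (0:ℝ) 1) :
    KK θ x t ≤ θ * (ww x * ww t) + x ^ 2 / 2 := by
  unfold KK
  have : (1 - t) ^ 2 ≤ 1 := by nlinarith [ht.1, ht.2]
  nlinarith [sq_nonneg (max (x - t) 0), sq_nonneg x]

lemma KK_lower' {θ x t : ℝ} (hx : x ∈ Icc (0:ℝ) 1) (ht : t ∈ Icc (0:ℝ) 1) :
    θ * (ww x * ww t) ≤ KK θ x t := by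
  have := KK_lower (θ := θ) hx ht
  have h : 0 ≤ x * ww x * ww t ^ 2 / 2 := by
    have := hx.1; have := ww_nonneg hx; positivity
  linarith

lemma KK_nonneg {θ x t : ℝ} (hθ : 0 < θ) (hx : x ∈ Icc (0:ℝ) 1) (ht : t ∈ Icc (0:ℝ) 1) :
    0 ≤ KK θ x t := by
  refine le_trans ?_ (KK_lower' hx ht)
  have := ww_nonneg hx; have := ww_nonneg ht; positivity

lemma KK_cont (θ x : ℝ) : Continuous (KK θ x) := by
  unfold KK ww; fun_prop

lemma beta_int {α β : ℝ} (hα : -1 < α) (hβ : -1 < β) :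
    IntervalIntegrable (fun t : ℝ => t ^ α * (1 - t) ^ β) volume 0 1 := by
  have h1 : IntervalIntegrable (fun t : ℝ => t ^ α * (1 - t) ^ β) volume 0 (1/2) := by
    refine (intervalIntegrable_rpow' hα).mul_continuousOn ?_
    rw [uIcc_of_le (by norm_num)]
    refine ContinuousOn.rpow_const (by fun_prop) ?_
    intro t ht; left; have := ht.2; intro h; linarith
  have h2 : IntervalIntegrable (fun t : ℝ => t ^ α * (1 - t) ^ β) volume (1/2) 1 := by
    have h3 : IntervalIntegrable (fun t : ℝ => (1 - t) ^ β) volume (1/2) 1 := by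
      have := (intervalIntegrable_rpow' (a := 1/2) (b := 0) hβ).comp_sub_left (c := 1)
      norm_num at this; exact this
    refine h3.continuousOn_mul ?_
    rw [uIcc_of_le (by norm_num)]
    refine ContinuousOn.rpow_const (by fun_prop) ?_
    intro t ht; left; have := ht.1; intro h; linarith
  exact h1.trans h2

lemma ww_rpow {t : ℝ} (ht : t ∈ Icc (0:ℝ) 1) (p : ℝ) : ww t ^ p = t ^ p * (1 - t) ^ p := by
  unfold ww; rw [Real.mul_rpow ht.1 (by linarith [ht.2])]

lemma ww_int {p : ℝ} (hp : -1 < p) : IntervalIntegrable (fun t => ww t ^ p) volume 0 1 := by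
  refine (beta_int hp hp).congr_ae ?_
  rw [uIoc_of_le zero_le_one]
  filter_upwards [self_mem_ae_restrict measurableSet_Ioc] with t ht
  exact (ww_rpow (Ioc_subset_Icc_self ht) p).symm

open BoundedContinuousFunction

noncomputable def gW (p : ℝ) (W : ℝ →ᵇ ℝ) (t : ℝ) : ℝ :=
  ww t ^ p * Real.exp (p * W (Real.log (t / (1 - t))))

lemma gW_int {p : ℝ} (hp : -1 < p) (W : ℝ →ᵇ ℝ) : IntervalIntegrable (gW p W) volume 0 1 := by
  unfold gW
  have h := ww_int hp
  rw [intervalIntegrable_iff] at h ⊢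
  refine Integrable.mul_bdd (c := Real.exp (|p| * ‖W‖)) h ?_ ?_
  · refine Measurable.aestronglyMeasurable ?_
    have := W.continuous.measurable
    fun_prop
  · refine Eventually.of_forall fun t => ?_
    rw [Real.norm_eq_abs, Real.abs_exp, Real.exp_le_exp]
    refine (le_abs_self _).trans ?_
    rw [abs_mul]
    exact mul_le_mul_of_nonneg_left (W.norm_coe_le_norm _) (abs_nonneg _)

lemma gW_pos (p : ℝ) (W : ℝ →ᵇ ℝ) {t : ℝ} (ht : t ∈ Ioo (0:ℝ) 1) : 0 < gW p W t :=
  mul_pos (Real.rpow_pos_of_pos (ww_pos ht) _) (Real.exp_pos _)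

lemma gW_cont (p : ℝ) (W : ℝ →ᵇ ℝ) : ContinuousOn (gW p W) (Ioo 0 1) := by
  unfold gW
  refine ContinuousOn.mul ?_ ?_
  · exact ww_cont.continuousOn.rpow_const fun t ht => Or.inl (ww_pos ht).ne'
  · refine Real.continuous_exp.comp_continuousOn (continuousOn_const.mul ?_)
    refine W.continuous.comp_continuousOn ?_
    refine ContinuousOn.log ?_ ?_
    · refine continuousOn_id.div (by fun_prop) ?_
      intro t ht h; exact (sub_pos.2 ht.2).ne' h
    · intro t ht h
      exact (div_pos ht.1 (sub_pos.2 ht.2)).ne' h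

lemma gW_compare (p : ℝ) (W V : ℝ →ᵇ ℝ) {t : ℝ} (ht : t ∈ Ioo (0:ℝ) 1) :
    gW p W t ≤ Real.exp (|p| * dist W V) * gW p V t := by
  unfold gW
  rw [mul_left_comm, ← Real.exp_add]
  refine mul_le_mul_of_nonneg_left (Real.exp_le_exp.2 ?_) (Real.rpow_nonneg (ww_pos ht).le _)
  set y := Real.log (t / (1 - t))
  have h1 : |p * (W y - V y)| ≤ |p| * dist W V := by
    rw [abs_mul]
    refine mul_le_mul_of_nonneg_left ?_ (abs_nonneg _)
    rw [← Real.dist_eq]; exact BoundedContinuousFunction.dist_coe_le_dist y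
  have := (le_abs_self _).trans h1
  linarith

noncomputable def TT (θ : ℝ) (g : ℝ → ℝ) (x : ℝ) : ℝ := ∫ t in (0:ℝ)..1, KK θ x t * g t

lemma KKg_int {g : ℝ → ℝ} (hg : IntervalIntegrable g volume 0 1) (θ x : ℝ) :
    IntervalIntegrable (fun t => KK θ x t * g t) volume 0 1 :=
  hg.continuousOn_mul (KK_cont θ x).continuousOn

lemma wg_int {g : ℝ → ℝ} (hg : IntervalIntegrable g volume 0 1) {w : ℝ → ℝ} (hw : Continuous w) :
    IntervalIntegrable (fun t => w t * g t) volume 0 1 :=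
  hg.continuousOn_mul hw.continuousOn

lemma I1_pos {g : ℝ → ℝ} (hg : IntervalIntegrable g volume 0 1) (hp : ∀ t ∈ Ioo (0:ℝ) 1, 0 < g t) :
    0 < ∫ t in (0:ℝ)..1, ww t * g t :=
  intervalIntegral_pos_of_pos_on (wg_int hg ww_cont)
    (fun t ht => mul_pos (ww_pos ht) (hp t ht)) one_pos

lemma TT_lower {θ : ℝ} {g : ℝ → ℝ} (hg : IntervalIntegrable g volume 0 1)
    (hp : ∀ t ∈ Ioo (0:ℝ) 1, 0 < g t) {x : ℝ} (hx : x ∈ Icc (0:ℝ) 1) :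
    θ * (∫ t in (0:ℝ)..1, ww t * g t) * ww x ≤ TT θ g x := by
  unfold TT
  rw [mul_right_comm, ← intervalIntegral.integral_const_mul]
  refine integral_mono_on_of_le_Ioo zero_le_one ((wg_int hg ww_cont).const_mul _) (KKg_int hg θ x) ?_
  intro t ht
  have := mul_le_mul_of_nonneg_right (KK_lower' (θ := θ) hx (Ioo_subset_Icc_self ht)) (hp t ht).le
  nlinarith

lemma TT_upper {θ : ℝ} {g : ℝ → ℝ} (hg : IntervalIntegrable g volume 0 1)
    (hp : ∀ t ∈ Ioo (0:ℝ) 1, 0 < g t) {x : ℝ} (hx : x ∈ Icc (0:ℝ) 1) :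
    TT θ g x ≤ (θ + 1) * (∫ t in (0:ℝ)..1, ww t * g t) * ww x := by
  unfold TT
  rw [mul_right_comm, ← intervalIntegral.integral_const_mul]
  refine integral_mono_on_of_le_Ioo zero_le_one (KKg_int hg θ x) ((wg_int hg ww_cont).const_mul _) ?_
  intro t ht
  have := mul_le_mul_of_nonneg_right (KK_upper (θ := θ) hx (Ioo_subset_Icc_self ht)) (hp t ht).le
  nlinarith

lemma TT_pos {θ : ℝ} (hθ : 0 < θ) {g : ℝ → ℝ} (hg : IntervalIntegrable g volume 0 1)
    (hp : ∀ t ∈ Ioo (0:ℝ) 1, 0 < g t) {x : ℝ} (hx : x ∈ Ioo (0:ℝ) 1) : 0 < TT θ g x :=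
  lt_of_lt_of_le (mul_pos (mul_pos hθ (I1_pos hg hp)) (ww_pos hx))
    (TT_lower hg hp (Ioo_subset_Icc_self hx))

lemma TT_compare {θ θ' c : ℝ} {g g' : ℝ → ℝ}
    (hg : IntervalIntegrable g volume 0 1) (hg' : IntervalIntegrable g' volume 0 1) {x : ℝ}
    (h : ∀ t ∈ Ioo (0:ℝ) 1, KK θ x t * g t ≤ c * (KK θ' x t * g' t)) :
    TT θ g x ≤ c * TT θ' g' x := by
  unfold TT
  rw [← intervalIntegral.integral_const_mul]
  exact integral_mono_on_of_le_Ioo zero_le_one (KKg_int hg θ x) ((KKg_int hg' θ' x).const_mul _) h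

lemma sig_mem (y : ℝ) : Real.sigmoid y ∈ Ioo (0:ℝ) 1 := ⟨Real.sigmoid_pos y, Real.sigmoid_lt_one y⟩

lemma logit_sig (y : ℝ) : Real.log (Real.sigmoid y / (1 - Real.sigmoid y)) = y := by
  have h := sig_mem y
  rw [← Real.sigmoid_neg, ← Real.sigmoid_mul_rexp_neg]
  rw [Real.exp_neg, div_mul_eq_div_div, div_self h.1.ne', one_div, inv_inv, Real.log_exp]

lemma exists_sig {x : ℝ} (hx : x ∈ Ioo (0:ℝ) 1) : ∃ y, Real.sigmoid y = x := by
  rw [← Real.range_sigmoid] at hx; exact hx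

noncomputable def PhiFun (p θ : ℝ) (W : ℝ →ᵇ ℝ) (y : ℝ) : ℝ :=
  Real.log (TT θ (gW p W) (Real.sigmoid y) / ww (Real.sigmoid y))

lemma PhiFun_cont {p θ : ℝ} (hp : -1 < p) (hθ : 0 < θ) (W : ℝ →ᵇ ℝ) :
    Continuous (PhiFun p θ W) := by
  unfold PhiFun
  have h1 : Continuous fun y => TT θ (gW p W) (Real.sigmoid y) := by
    unfold TT
    refine continuous_of_dominated_interval (bound := fun t => (θ + 1) * gW p W t) ?_ ?_ ?_ ?_
    · intro y
      have := (KKg_int (gW_int hp W) θ (Real.sigmoid y)).aestronglyMeasurable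
      rwa [uIoc_of_le zero_le_one]
    · intro y
      refine Eventually.of_forall fun t ht => ?_
      rw [uIoc_of_le zero_le_one] at ht
      have ht' := Ioc_subset_Icc_self ht
      have hs := Ioo_subset_Icc_self (sig_mem y)
      have hg : 0 ≤ gW p W t := mul_nonneg (Real.rpow_nonneg (ww_nonneg ht') _) (Real.exp_pos _).le
      rw [Real.norm_eq_abs, abs_of_nonneg (mul_nonneg (KK_nonneg hθ hs ht') hg)]
      refine mul_le_mul_of_nonneg_right ((KK_upper hs ht').trans ?_) hg
      have h1 := ww_le_one hs
      have h2 := ww_le_one ht'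
      have := mul_le_mul h1 h2 (ww_nonneg ht') zero_le_one
      nlinarith
    · exact (gW_int hp W).const_mul _
    · refine Eventually.of_forall fun t _ => ?_
      have := _root_.continuous_sigmoid
      unfold KK ww
      fun_prop
  refine Continuous.log (h1.div (ww_cont.comp _root_.continuous_sigmoid)
    fun y => (ww_pos (sig_mem y)).ne') fun y => ?_
  exact (div_pos (TT_pos hθ (gW_int hp W) (fun t => gW_pos p W) (sig_mem y))
    (ww_pos (sig_mem y))).ne'

lemma PhiFun_bdd {p θ : ℝ} (hp : -1 < p) (hθ : 0 < θ) (W : ℝ →ᵇ ℝ) :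
    ∃ C, ∀ y, ‖PhiFun p θ W y‖ ≤ C := by
  have hI := I1_pos (gW_int hp W) (fun t => gW_pos p W)
  set I := ∫ t in (0:ℝ)..1, ww t * gW p W t
  refine ⟨max |Real.log (θ * I)| |Real.log ((θ + 1) * I)|, fun y => ?_⟩
  have hs := sig_mem y
  have hw := ww_pos hs
  have l := TT_lower (θ := θ) (gW_int hp W) (fun t => gW_pos p W) (Ioo_subset_Icc_self hs)
  have u := TT_upper (θ := θ) (gW_int hp W) (fun t => gW_pos p W) (Ioo_subset_Icc_self hs)
  rw [← le_div_iff₀ hw] at l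
  rw [← div_le_iff₀ hw] at u
  have l0 : 0 < θ * I := by positivity
  have l' := Real.log_le_log l0 l
  have u' := Real.log_le_log (l0.trans_le l) u
  rw [Real.norm_eq_abs]
  exact abs_le_max_abs_abs l' u'

noncomputable def Phi {p θ : ℝ} (hp : -1 < p) (hθ : 0 < θ) (W : ℝ →ᵇ ℝ) : ℝ →ᵇ ℝ :=
  BoundedContinuousFunction.ofNormedAddCommGroup (PhiFun p θ W) (PhiFun_cont hp hθ W)
    (PhiFun_bdd hp hθ W).choose (PhiFun_bdd hp hθ W).choose_spec

lemma Phi_apply {p θ : ℝ} (hp : -1 < p) (hθ : 0 < θ) (W : ℝ →ᵇ ℝ) (y : ℝ) :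
    Phi hp hθ W y = Real.log (TT θ (gW p W) (Real.sigmoid y) / ww (Real.sigmoid y)) := rfl

lemma log_ratio_le {A B w d : ℝ} (hA : 0 < A) (hB : 0 < B) (hw : 0 < w)
    (h : A ≤ Real.exp d * B) : Real.log (A / w) ≤ d + Real.log (B / w) := by
  rw [Real.log_div hA.ne' hw.ne', Real.log_div hB.ne' hw.ne']
  have := Real.log_le_log hA h
  rw [Real.log_mul (Real.exp_pos _).ne' hB.ne', Real.log_exp] at this
  linarith

lemma Phi_lip {p θ : ℝ} (hp : -1 < p) (hθ : 0 < θ) (W V : ℝ →ᵇ ℝ) :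
    dist (Phi hp hθ W) (Phi hp hθ V) ≤ |p| * dist W V := by
  have key : ∀ W V : ℝ →ᵇ ℝ, ∀ y, Phi hp hθ W y ≤ |p| * dist W V + Phi hp hθ V y := by
    intro W V y
    have hs := sig_mem y
    rw [Phi_apply, Phi_apply]
    refine log_ratio_le (TT_pos hθ (gW_int hp W) (fun t => gW_pos p W) hs)
      (TT_pos hθ (gW_int hp V) (fun t => gW_pos p V) hs) (ww_pos hs) ?_
    refine TT_compare (gW_int hp W) (gW_int hp V) fun t ht => ?_
    have := mul_le_mul_of_nonneg_left (gW_compare p W V ht)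
      (KK_nonneg hθ (Ioo_subset_Icc_self hs) (Ioo_subset_Icc_self ht))
    linarith
  rw [BoundedContinuousFunction.dist_le (by positivity)]
  intro y
  rw [Real.dist_eq, abs_le]
  have h1 := key W V y
  have h2 := key V W y
  rw [dist_comm V W] at h2
  constructor <;> linarith

lemma Phi_param {p l l' : ℝ} (hp : -1 < p) (W : ℝ →ᵇ ℝ) :
    dist (Phi hp (Real.exp_pos l) W) (Phi hp (Real.exp_pos l') W) ≤ |l - l'| := by
  have key : ∀ l l' y, Phi hp (Real.exp_pos l) W y ≤ |l - l'| + Phi hp (Real.exp_pos l') W y := by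
    intro l l' y
    have hs := sig_mem y
    rw [Phi_apply, Phi_apply]
    refine log_ratio_le (TT_pos (Real.exp_pos l) (gW_int hp W) (fun t => gW_pos p W) hs)
      (TT_pos (Real.exp_pos l') (gW_int hp W) (fun t => gW_pos p W) hs) (ww_pos hs) ?_
    refine TT_compare (gW_int hp W) (gW_int hp W) fun t ht => ?_
    rw [← mul_assoc]
    refine mul_le_mul_of_nonneg_right ?_ (gW_pos p W ht).le
    have hs' := Ioo_subset_Icc_self hs
    have ht' := Ioo_subset_Icc_self ht
    have h0 := KK_lower' (θ := 0) hs' ht'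
    unfold KK at h0 ⊢
    simp only [zero_mul, zero_add] at h0
    set P := (Real.sigmoid y ^ 2 * (1 - t) ^ 2 - max (Real.sigmoid y - t) 0 ^ 2) / 2
    have hq : 0 ≤ ww (Real.sigmoid y) * ww t := mul_nonneg (ww_nonneg hs') (ww_nonneg ht')
    have e1 : Real.exp l ≤ Real.exp |l - l'| * Real.exp l' := by
      rw [← Real.exp_add, Real.exp_le_exp]; linarith [le_abs_self (l - l')]
    have e2 : 1 ≤ Real.exp |l - l'| := Real.one_le_exp (abs_nonneg _)
    have := mul_le_mul_of_nonneg_right e1 hq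
    nlinarith
  rw [BoundedContinuousFunction.dist_le (by positivity)]
  intro y
  rw [Real.dist_eq, abs_le]
  have h1 := key l l' y
  have h2 := key l' l y
  rw [abs_sub_comm l' l] at h2
  constructor <;> linarith

lemma exists_humps {p : ℝ} (hp : |p| < 1) : ∃ (G : ℝ → ℝ → ℝ) (C : ℝ),
    (∀ l, Hump p (Real.exp l) (G l)) ∧
    ∀ l l', ∀ t ∈ Ioo (0:ℝ) 1, G l t ≤ Real.exp (C * |l - l'|) * G l' t := by
  have hp1 : -1 < p := (abs_lt.1 hp).1
  let K : NNReal := ⟨|p|, abs_nonneg p⟩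
  have hK : K < 1 := by rw [← NNReal.coe_lt_coe]; exact hp
  have hc : ∀ l, ContractingWith K (Phi hp1 (Real.exp_pos l)) := fun l =>
    ⟨hK, LipschitzWith.of_dist_le_mul fun W V => Phi_lip hp1 (Real.exp_pos l) W V⟩
  let W : ℝ → (ℝ →ᵇ ℝ) := fun l => (hc l).fixedPoint
  have hW : ∀ l, Phi hp1 (Real.exp_pos l) (W l) = W l := fun l => (hc l).fixedPoint_isFixedPt
  refine ⟨fun l => gW p (W l), |p| * (1 / (1 - |p|)), fun l => ?_, fun l l' t ht => ?_⟩
  · have hF : ∀ x ∈ Ioo (0:ℝ) 1, 0 < TT (Real.exp l) (gW p (W l)) x := fun x hx =>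
      TT_pos (Real.exp_pos l) (gW_int hp1 _) (fun t => gW_pos p _) hx
    refine ⟨gW_int hp1 _, gW_cont p _, fun t ht => gW_pos p _ ht, hF, fun x hx => ?_⟩
    obtain ⟨y, rfl⟩ := exists_sig hx
    have h1 : W l y = Real.log (TT (Real.exp l) (gW p (W l)) (Real.sigmoid y)
      / ww (Real.sigmoid y)) := by
      rw [← Phi_apply hp1 (Real.exp_pos l), hW]
    change _ = TT (Real.exp l) (gW p (W l)) (Real.sigmoid y) ^ p
    have hT := hF _ hx
    set A := TT (Real.exp l) (gW p (W l)) (Real.sigmoid y)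
    have hw := ww_pos hx
    change ww (Real.sigmoid y) ^ p * Real.exp (p * W l (Real.log
      (Real.sigmoid y / (1 - Real.sigmoid y)))) = A ^ p
    rw [logit_sig, h1, Real.log_div hT.ne' hw.ne', Real.rpow_def_of_pos hw, Real.rpow_def_of_pos hT,
      ← Real.exp_add]
    congr 1; ring
  · refine (gW_compare p (W l) (W l') ht).trans ?_
    refine mul_le_mul_of_nonneg_right (Real.exp_le_exp.2 ?_) (gW_pos p _ ht).le
    have := (hc l).fixedPoint_lipschitz_in_map (hc l') (C := |l - l'|)
      (fun z => Phi_param hp1 z)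
    rw [mul_assoc]
    refine mul_le_mul_of_nonneg_left (this.trans (le_of_eq ?_)) (abs_nonneg _)
    change |l - l'| / (1 - |p|) = _
    ring

lemma int_le {f h : ℝ → ℝ} (hf : IntervalIntegrable f volume 0 1)
    (hh : IntervalIntegrable h volume 0 1) (H : ∀ t ∈ Ioo (0:ℝ) 1, f t ≤ h t) :
    ∫ t in (0:ℝ)..1, f t ≤ ∫ t in (0:ℝ)..1, h t :=
  integral_mono_on_of_le_Ioo zero_le_one hf hh H

lemma TT_lower2 {θ : ℝ} (hθ : 0 < θ) {g : ℝ → ℝ} (hg : IntervalIntegrable g volume 0 1)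
    (hp : ∀ t ∈ Ioo (0:ℝ) 1, 0 < g t) {x : ℝ} (hx : x ∈ Icc (0:ℝ) 1) :
    (∫ t in (0:ℝ)..1, ww t ^ 2 * g t) / 2 * (x * ww x) ≤ TT θ g x := by
  unfold TT
  have e : (∫ t in (0:ℝ)..1, ww t ^ 2 * g t) / 2 * (x * ww x)
      = ∫ t in (0:ℝ)..1, (x * ww x / 2) * (ww t ^ 2 * g t) := by
    rw [intervalIntegral.integral_const_mul]; ring
  rw [e]
  refine int_le ((wg_int hg (ww_cont.pow 2)).const_mul _) (KKg_int hg θ x) ?_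
  intro t ht
  have ht' := Ioo_subset_Icc_self ht
  have := mul_le_mul_of_nonneg_right (KK_lower (θ := θ) hx ht') (hp t ht).le
  have h0 : 0 ≤ θ * (ww x * ww t) * g t :=
    mul_nonneg (mul_nonneg hθ.le (mul_nonneg (ww_nonneg hx) (ww_nonneg ht'))) (hp t ht).le
  linarith

lemma TT_upper2 {θ : ℝ} {g : ℝ → ℝ} (hg : IntervalIntegrable g volume 0 1)
    (hp : ∀ t ∈ Ioo (0:ℝ) 1, 0 < g t) (x : ℝ) :
    TT θ g x ≤ θ * (∫ t in (0:ℝ)..1, ww t * g t) * ww x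
      + x ^ 2 / 2 * ∫ t in (0:ℝ)..1, g t := by
  unfold TT
  rw [mul_right_comm, ← intervalIntegral.integral_const_mul, ← intervalIntegral.integral_const_mul,
    ← intervalIntegral.integral_add ((wg_int hg ww_cont).const_mul _) (hg.const_mul _)]
  refine int_le (KKg_int hg θ x) (((wg_int hg ww_cont).const_mul _).add (hg.const_mul _)) ?_
  intro t ht
  have := mul_le_mul_of_nonneg_right (KK_upper2 (θ := θ) (x := x) (Ioo_subset_Icc_self ht))
    (hp t ht).le
  linarith

lemma g_le_neg {p θ : ℝ} {g : ℝ → ℝ} (h : Hump p θ g) (hp : p ≤ 0) {x m : ℝ}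
    (hx : x ∈ Ioo (0:ℝ) 1) (hm : 0 < m) (hF : m ≤ TT θ g x) : g x ≤ m ^ p := by
  rw [h.eq x hx]; exact Real.rpow_le_rpow_of_nonpos hm hF hp

lemma g_ge_neg {p θ : ℝ} {g : ℝ → ℝ} (h : Hump p θ g) (hp : p ≤ 0) {x m : ℝ}
    (hx : x ∈ Ioo (0:ℝ) 1) (hF : TT θ g x ≤ m) : m ^ p ≤ g x := by
  rw [h.eq x hx]; exact Real.rpow_le_rpow_of_nonpos (h.Fpos x hx) hF hp

lemma g_le_pos {p θ : ℝ} {g : ℝ → ℝ} (h : Hump p θ g) (hp : 0 ≤ p) {x m : ℝ}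
    (hx : x ∈ Ioo (0:ℝ) 1) (hF : TT θ g x ≤ m) : g x ≤ m ^ p := by
  rw [h.eq x hx]; exact Real.rpow_le_rpow (h.Fpos x hx).le hF hp

lemma g_ge_pos {p θ : ℝ} {g : ℝ → ℝ} (h : Hump p θ g) (hp : 0 ≤ p) {x m : ℝ}
    (hx : x ∈ Ioo (0:ℝ) 1) (hm : 0 ≤ m) (hF : m ≤ TT θ g x) : m ^ p ≤ g x := by
  rw [h.eq x hx]; exact Real.rpow_le_rpow hm hF hp

lemma wt_pos {g : ℝ → ℝ} (hg : IntervalIntegrable g volume 0 1)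
    (hp : ∀ t ∈ Ioo (0:ℝ) 1, 0 < g t) {w : ℝ → ℝ} (hw : Continuous w)
    (hw0 : ∀ t ∈ Ioo (0:ℝ) 1, 0 < w t) : 0 < ∫ t in (0:ℝ)..1, w t * g t :=
  intervalIntegral_pos_of_pos_on (wg_int hg hw)
    (fun t ht => mul_pos (hw0 t ht) (hp t ht)) one_pos

lemma wt_mono {g : ℝ → ℝ} (hg : IntervalIntegrable g volume 0 1)
    (hp : ∀ t ∈ Ioo (0:ℝ) 1, 0 < g t) {w v : ℝ → ℝ} (hw : Continuous w) (hv : Continuous v)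
    (h : ∀ t ∈ Ioo (0:ℝ) 1, w t ≤ v t) :
    ∫ t in (0:ℝ)..1, w t * g t ≤ ∫ t in (0:ℝ)..1, v t * g t :=
  int_le (wg_int hg hw) (wg_int hg hv)
    (fun t ht => mul_le_mul_of_nonneg_right (h t ht) (hp t ht).le)

lemma tww_rpow {t : ℝ} (ht : t ∈ Ioo (0:ℝ) 1) (p : ℝ) :
    (t * ww t) ^ p = t ^ (2 * p) * (1 - t) ^ p := by
  have h1 := ht.1
  have h2 := sub_pos.2 ht.2
  unfold ww
  rw [← mul_assoc, Real.mul_rpow (by positivity) h2.le, ← sq, Real.rpow_mul h1.le]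
  norm_cast

lemma J_pos {p θ : ℝ} {g : ℝ → ℝ} (h : Hump p θ g) : 0 < ∫ t in (0:ℝ)..1, ww t ^ 2 * g t :=
  wt_pos h.int h.pos (ww_cont.pow 2) (fun t ht => pow_pos (ww_pos ht) 2)

lemma I0_pos {p θ : ℝ} {g : ℝ → ℝ} (h : Hump p θ g) : 0 < ∫ t in (0:ℝ)..1, g t :=
  intervalIntegral_pos_of_pos_on h.int (fun t ht => h.pos t ht) one_pos

lemma J_le_I2 {p θ : ℝ} {g : ℝ → ℝ} (h : Hump p θ g) :
    ∫ t in (0:ℝ)..1, ww t ^ 2 * g t ≤ ∫ t in (0:ℝ)..1, (1 - t) ^ 2 * g t := by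
  refine wt_mono h.int h.pos (ww_cont.pow 2) (by fun_prop) fun t ht => ?_
  have h1 := ht.1
  have h2 := sub_pos.2 ht.2
  unfold ww
  refine pow_le_pow_left₀ (by positivity) ?_ 2
  nlinarith [ht.2]

lemma I1_le_I0 {p θ : ℝ} {g : ℝ → ℝ} (h : Hump p θ g) :
    ∫ t in (0:ℝ)..1, ww t * g t ≤ ∫ t in (0:ℝ)..1, g t := by
  refine int_le (wg_int h.int ww_cont) h.int fun t ht => ?_
  have := mul_le_mul_of_nonneg_right (ww_le_one (Ioo_subset_Icc_self ht)) (h.pos t ht).le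
  linarith

lemma I2_le_I0 {p θ : ℝ} {g : ℝ → ℝ} (h : Hump p θ g) :
    ∫ t in (0:ℝ)..1, (1 - t) ^ 2 * g t ≤ ∫ t in (0:ℝ)..1, g t := by
  refine int_le (wg_int h.int (by fun_prop)) h.int fun t ht => ?_
  have : (1 - t) ^ 2 ≤ 1 := by nlinarith [ht.1, ht.2]
  have := mul_le_mul_of_nonneg_right this (h.pos t ht).le
  linarith

lemma I2_ge {p θ : ℝ} {g : ℝ → ℝ} (h : Hump p θ g) :
    (∫ t in (0:ℝ)..1, g t) - 2 * (∫ t in (0:ℝ)..1, t * g t)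
      ≤ ∫ t in (0:ℝ)..1, (1 - t) ^ 2 * g t := by
  have hi : IntervalIntegrable (fun t => 2 * (t * g t)) volume 0 1 :=
    (wg_int h.int continuous_id).const_mul 2
  rw [← intervalIntegral.integral_const_mul, ← intervalIntegral.integral_sub h.int hi]
  refine int_le (h.int.sub hi)
    (wg_int h.int (by fun_prop)) fun t ht => ?_
  have : 1 - 2 * t ≤ (1 - t) ^ 2 := by nlinarith [ht.1, ht.2]
  have := mul_le_mul_of_nonneg_right this (h.pos t ht).le
  linarith

/-- upper bounds of weighted integrals when `p ≤ 0` -/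
lemma wt_le_J {p θ : ℝ} (hθ : 0 < θ) {g : ℝ → ℝ} (h : Hump p θ g) (hp : p ≤ 0)
    {w b : ℝ → ℝ} (hw : Continuous w) (hw0 : ∀ t ∈ Ioo (0:ℝ) 1, 0 ≤ w t)
    (hb : IntervalIntegrable b volume 0 1)
    (hwb : ∀ t ∈ Ioo (0:ℝ) 1, w t * (t ^ (2 * p) * (1 - t) ^ p) ≤ b t) :
    ∫ t in (0:ℝ)..1, w t * g t
      ≤ ((∫ t in (0:ℝ)..1, ww t ^ 2 * g t) / 2) ^ p * ∫ t in (0:ℝ)..1, b t := by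
  have hJ := J_pos h
  rw [← intervalIntegral.integral_const_mul]
  refine int_le (wg_int h.int hw) (hb.const_mul _) fun t ht => ?_
  have ht' := Ioo_subset_Icc_self ht
  have hl := TT_lower2 hθ h.int h.pos ht'
  set J := ∫ t in (0:ℝ)..1, ww t ^ 2 * g t
  have htw : 0 < t * ww t := mul_pos ht.1 (ww_pos ht)
  have h1 := g_le_neg h hp ht (by positivity) hl
  rw [Real.mul_rpow (by positivity) htw.le, tww_rpow ht] at h1
  have h2 := mul_le_mul_of_nonneg_left h1 (hw0 t ht)
  have h3 := mul_le_mul_of_nonneg_left (hwb t ht) (Real.rpow_nonneg (by positivity : 0 ≤ J / 2) p)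
  linarith

lemma ww_sq_int : ∫ t in (0:ℝ)..1, ww t ^ 2 = 1 / 30 := by
  have : ∀ t : ℝ, ww t ^ 2 = t ^ 2 - 2 * t ^ 3 + t ^ 4 := fun t => by unfold ww; ring
  simp_rw [this]
  rw [intervalIntegral.integral_add, intervalIntegral.integral_sub]
  · simp; norm_num
  all_goals exact Continuous.intervalIntegrable (by fun_prop) _ _

lemma J_lower {p θ : ℝ} (hθ : 0 < θ) (hθ1 : θ ≤ 1) {g : ℝ → ℝ} (h : Hump p θ g) (hp : p ≤ 0)
    (hp' : -(3/4) ≤ p) : Real.exp (-14) ≤ ∫ t in (0:ℝ)..1, ww t ^ 2 * g t := by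
  have hJ := J_pos h
  have hI := I1_pos h.int h.pos
  have e1 : ∫ t in (0:ℝ)..1, ww t * g t
      ≤ ((∫ t in (0:ℝ)..1, ww t ^ 2 * g t) / 2) ^ p * ∫ t in (0:ℝ)..1, t ^ (-(1/2) : ℝ) := by
    refine wt_le_J hθ h hp ww_cont (fun t ht => (ww_pos ht).le)
      (intervalIntegrable_rpow' (by norm_num)) fun t ht => ?_
    have ht0 := ht.1
    have h1t := sub_pos.2 ht.2
    have : ww t * (t ^ (2 * p) * (1 - t) ^ p) = t ^ (1 + 2 * p) * (1 - t) ^ (1 + p) := by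
      rw [Real.rpow_add ht0, Real.rpow_add h1t, Real.rpow_one, Real.rpow_one]; unfold ww; ring
    rw [this]
    have a1 : t ^ (1 + 2 * p) ≤ t ^ (-(1/2) : ℝ) :=
      Real.rpow_le_rpow_of_exponent_ge ht0 ht.2.le (by linarith)
    have a2 : (1 - t) ^ (1 + p) ≤ 1 := Real.rpow_le_one h1t.le (by linarith) (by linarith)
    calc _ ≤ t ^ (-(1/2) : ℝ) * 1 := mul_le_mul a1 a2 (by positivity) (by positivity)
      _ = _ := mul_one _
  rw [integral_rpow (Or.inl (by norm_num))] at e1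
  have e2 : (2 * ∫ t in (0:ℝ)..1, ww t * g t) ^ p / 30 ≤ ∫ t in (0:ℝ)..1, ww t ^ 2 * g t := by
    rw [div_eq_mul_one_div, ← ww_sq_int, ← intervalIntegral.integral_const_mul]
    refine int_le (Continuous.intervalIntegrable (by unfold ww; fun_prop) _ _)
      (wg_int h.int (ww_cont.pow 2)) fun t ht => ?_
    have ht' := Ioo_subset_Icc_self ht
    have hw := ww_pos ht
    have hu := TT_upper (θ := θ) h.int h.pos ht'
    have hw1 := ww_le_one ht'
    rw [mul_comm]
    refine mul_le_mul_of_nonneg_left (g_ge_neg h hp ht (hu.trans ?_)) (by positivity)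
    have : (θ + 1) * (∫ t in (0:ℝ)..1, ww t * g t) ≤ 2 * ∫ t in (0:ℝ)..1, ww t * g t :=
      mul_le_mul_of_nonneg_right (by linarith) hI.le
    exact (mul_le_of_le_one_right (by positivity) hw1).trans this
  generalize (∫ t in (0:ℝ)..1, ww t ^ 2 * g t) = J at *
  generalize (∫ t in (0:ℝ)..1, ww t * g t) = I at *
  have e1' : I ≤ (J / 2) ^ p * 2 := by norm_num at e1 ⊢; exact e1
  have l1 := Real.log_le_log hI e1'
  rw [Real.log_mul (by positivity) (by norm_num), Real.log_rpow (by positivity),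
    Real.log_div hJ.ne' (by norm_num)] at l1
  have l2 := Real.log_le_log (by positivity) e2
  rw [Real.log_div (by positivity) (by norm_num), Real.log_rpow (by positivity),
    Real.log_mul (by norm_num) hI.ne'] at l2
  have b30 : Real.log 30 ≤ 4 := by
    rw [Real.log_le_iff_le_exp (by norm_num)]
    have := Real.exp_one_gt_d9
    have : (2.7:ℝ) ^ 4 ≤ Real.exp 1 ^ 4 := pow_le_pow_left₀ (by norm_num) (by linarith) 4
    rw [← Real.exp_nat_mul] at this
    norm_num at this ⊢; linarith
  have b2 : Real.log 2 ≤ 0.7 := by linarith [Real.log_two_lt_d9]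
  have b2' : 0 < Real.log 2 := Real.log_pos (by norm_num)
  rw [← Real.le_log_iff_exp_le hJ]
  by_contra! hc
  obtain ⟨q, rfl⟩ : ∃ q, p = -q := ⟨-p, by ring⟩
  have hq : 0 ≤ q := by linarith
  have hq' : q ≤ 3/4 := by linarith
  have m1 := mul_le_mul_of_nonneg_left l1 hq
  have k1 : (1 - q ^ 2) * Real.log J ≥ - Real.log 30 - (q * 2 + q ^ 2) * Real.log 2 := by
    nlinarith
  have k2 : (q * 2 + q ^ 2) * Real.log 2 ≤ 2.1 * 0.7 := by
    apply mul_le_mul _ b2 b2'.le (by norm_num); nlinarith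
  have k3 : 7/16 ≤ 1 - q ^ 2 := by nlinarith
  nlinarith

lemma J_rpow_le {p θ : ℝ} (hθ : 0 < θ) (hθ1 : θ ≤ 1) {g : ℝ → ℝ} (h : Hump p θ g) (hp : p ≤ 0)
    (hp' : -(3/4) ≤ p) : ((∫ t in (0:ℝ)..1, ww t ^ 2 * g t) / 2) ^ p ≤ Real.exp 15 := by
  have h1 := J_lower hθ hθ1 h hp hp'
  have h2 : Real.exp (-15) ≤ (∫ t in (0:ℝ)..1, ww t ^ 2 * g t) / 2 := by
    have : Real.exp (-14) = Real.exp 1 * Real.exp (-15) := by rw [← Real.exp_add]; norm_num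
    have e : 2 ≤ Real.exp 1 := by linarith [Real.exp_one_gt_d9]
    have := mul_le_mul_of_nonneg_right e (Real.exp_pos (-15)).le
    linarith
  refine (Real.rpow_le_rpow_of_nonpos (Real.exp_pos _) h2 hp).trans ?_
  rw [← Real.exp_mul, Real.exp_le_exp]
  linarith

lemma end_B1 : ∃ C : ℝ, 0 < C ∧ ∀ p θ : ℝ, -(3/4) ≤ p → p ≤ -(1/2) → 0 < θ → θ ≤ 1 →
    ∀ g, Hump p θ g → ∫ t in (0:ℝ)..1, t * g t ≤ C := by
  have hb : IntervalIntegrable (fun t : ℝ => t ^ (-(1/2):ℝ) * (1 - t) ^ (-(3/4):ℝ)) volume 0 1 :=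
    beta_int (by norm_num) (by norm_num)
  have hB : 0 < ∫ t in (0:ℝ)..1, t ^ (-(1/2):ℝ) * (1 - t) ^ (-(3/4):ℝ) :=
    intervalIntegral_pos_of_pos_on hb (fun t ht => mul_pos (Real.rpow_pos_of_pos ht.1 _)
      (Real.rpow_pos_of_pos (sub_pos.2 ht.2) _)) one_pos
  refine ⟨_, mul_pos (Real.exp_pos 15) hB, fun p θ hp hp' hθ hθ1 g h => ?_⟩
  refine (wt_le_J hθ h (by linarith) continuous_id (fun t ht => ht.1.le) hb fun t ht => ?_).trans
    (mul_le_mul_of_nonneg_right (J_rpow_le hθ hθ1 h (by linarith) hp) hB.le)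
  have ht0 := ht.1
  have h1t := sub_pos.2 ht.2
  have : t * (t ^ (2 * p) * (1 - t) ^ p) = t ^ (1 + 2 * p) * (1 - t) ^ p := by
    rw [Real.rpow_add ht0, Real.rpow_one]; ring
  refine (le_of_eq this).trans ?_
  exact mul_le_mul (Real.rpow_le_rpow_of_exponent_ge ht0 ht.2.le (by linarith))
    (Real.rpow_le_rpow_of_exponent_ge h1t (by linarith) (by linarith)) (by positivity)
    (by positivity)

lemma I1_le_T {p θ : ℝ} {g : ℝ → ℝ} (h : Hump p θ g) :
    ∫ t in (0:ℝ)..1, ww t * g t ≤ ∫ t in (0:ℝ)..1, t * g t := by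
  refine wt_mono h.int h.pos ww_cont continuous_id fun t ht => ?_
  change ww t ≤ t
  unfold ww; nlinarith [ht.1, ht.2]

lemma I0_big {p θ M : ℝ} (hp : -(3/4) ≤ p) (hp' : p ≤ -(1/2)) (hθ : 0 < θ) (hM : 1 ≤ M)
    (hθM : θ < Real.exp (-(2 * M ^ 2))) {g : ℝ → ℝ} (h : Hump p θ g) :
    M < ∫ t in (0:ℝ)..1, g t := by
  by_contra! hc
  have hI0 := I0_pos h
  have hI1 := I1_pos h.int h.pos
  have hle := I1_le_I0 h
  have hθ1 : θ < 1 := hθM.trans_le (Real.exp_le_one_iff.2 (by nlinarith))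
  have hi : IntervalIntegrable g volume θ 1 :=
    h.int.mono_set (by rw [uIcc_of_le hθ1.le, uIcc_of_le zero_le_one]; exact Icc_subset_Icc_left hθ.le)
  have hi0 : IntervalIntegrable g volume 0 θ :=
    h.int.mono_set (by rw [uIcc_of_le hθ.le, uIcc_of_le zero_le_one]; exact Icc_subset_Icc_right hθ1.le)
  have s1 : ∫ t in θ..1, g t ≤ ∫ t in (0:ℝ)..1, g t := by
    rw [← integral_add_adjacent_intervals hi0 hi]
    have : 0 < ∫ t in (0:ℝ)..θ, g t := intervalIntegral_pos_of_pos_on hi0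
      (fun t ht => h.pos t ⟨ht.1, ht.2.trans hθ1⟩) hθ
    linarith
  have s2 : ∫ t in θ..1, (2 * M)⁻¹ * t⁻¹ ≤ ∫ t in θ..1, g t := by
    refine integral_mono_on_of_le_Ioo hθ1.le ?_ hi ?_
    · refine (ContinuousOn.intervalIntegrable ?_)
      rw [uIcc_of_le hθ1.le]
      refine continuousOn_const.mul (continuousOn_id.inv₀ fun t ht => ?_)
      exact (hθ.trans_le ht.1).ne'
    · intro t ht
      have ht0 : 0 < t := hθ.trans ht.1
      have htI : t ∈ Ioo (0:ℝ) 1 := ⟨ht0, ht.2⟩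
      have hu := TT_upper2 (θ := θ) h.int h.pos t
      have hu2 : TT θ g t ≤ (2 * M) * t ^ 2 := by
        refine hu.trans ?_
        have w1 : ww t ≤ t := by unfold ww; nlinarith
        have w0 := ww_pos htI
        have : θ * (∫ t in (0:ℝ)..1, ww t * g t) * ww t ≤ t * M * t := by
          refine mul_le_mul (mul_le_mul ht.1.le (hle.trans hc) hI1.le ht0.le) w1 w0.le (by positivity)
        have : t ^ 2 / 2 * (∫ t in (0:ℝ)..1, g t) ≤ t ^ 2 / 2 * M :=
          mul_le_mul_of_nonneg_left hc (by positivity)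
        nlinarith [sq_nonneg t]
      refine le_trans ?_ (g_ge_neg h (by linarith) htI hu2)
      rw [Real.mul_rpow (by positivity) (by positivity)]
      refine mul_le_mul ?_ ?_ (by positivity) (by positivity)
      · rw [← Real.rpow_neg_one]
        exact Real.rpow_le_rpow_of_exponent_le (by linarith) (by linarith)
      · rw [← Real.rpow_natCast, ← Real.rpow_mul ht0.le, ← Real.rpow_neg_one]
        refine Real.rpow_le_rpow_of_exponent_ge ht0 ht.2.le ?_
        push_cast; linarith
  rw [intervalIntegral.integral_const_mul, integral_inv_of_pos hθ one_pos] at s2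
  have l := Real.log_lt_log hθ hθM
  rw [Real.log_exp] at l
  rw [one_div, Real.log_inv] at s2
  have : (2 * M)⁻¹ * (2 * M ^ 2) < (2 * M)⁻¹ * (- Real.log θ) :=
    mul_lt_mul_of_pos_left (by linarith) (by positivity)
  have e : (2 * M)⁻¹ * (2 * M ^ 2) = M := by field_simp
  linarith

lemma end_B : ∃ θ : ℝ, 0 < θ ∧ ∀ p b : ℝ, -(3/4) ≤ p → p ≤ -(1/2) → 1/2 ≤ b → b ≤ 1 →
    ∀ g, Hump p θ g → 0 < (1 + b) * ((∫ t in (0:ℝ)..1, (1 - t) ^ 2 * g t)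
      - 2 * θ * ∫ t in (0:ℝ)..1, ww t * g t) - ∫ t in (0:ℝ)..1, g t := by
  obtain ⟨C, hC, hT⟩ := end_B1
  set M := max 1 (16 * C) with hM
  have hM1 : 1 ≤ M := le_max_left _ _
  have hM2 : 16 * C ≤ M := le_max_right _ _
  refine ⟨Real.exp (-(2 * M ^ 2) - 1), Real.exp_pos _, fun p b hp hp' hb hb1 g h => ?_⟩
  have hlt : Real.exp (-(2 * M ^ 2) - 1) < Real.exp (-(2 * M ^ 2)) := Real.exp_lt_exp.2 (by linarith)
  have hθ1 : Real.exp (-(2 * M ^ 2) - 1) ≤ 1 := Real.exp_le_one_iff.2 (by nlinarith)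
  have hθ := Real.exp_pos (-(2 * M ^ 2) - 1)
  have k0 := I0_big hp hp' hθ hM1 hlt h
  have k1 := hT p _ hp hp' hθ hθ1 g h
  have k2 := I1_le_T h
  have k3 := I2_ge h
  have k4 := I1_pos h.int h.pos
  set θ := Real.exp (-(2 * M ^ 2) - 1)
  generalize (∫ t in (0:ℝ)..1, (1 - t) ^ 2 * g t) = I2 at *
  generalize (∫ t in (0:ℝ)..1, ww t * g t) = I1 at *
  generalize (∫ t in (0:ℝ)..1, t * g t) = T at *
  generalize (∫ t in (0:ℝ)..1, g t) = I0 at *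
  have k5 : θ * I1 ≤ C := by nlinarith
  have k6 : I0 - 4 * C ≤ I2 - 2 * θ * I1 := by nlinarith
  have k7 : (1 + b) * (I0 - 4 * C) ≤ (1 + b) * (I2 - 2 * θ * I1) :=
    mul_le_mul_of_nonneg_left k6 (by linarith)
  nlinarith


lemma le_of_self_le {x K p : ℝ} (hx : 0 < x) (hK : 0 < K) (hp : p < 1) (h : x ≤ K * x ^ p) :
    x ≤ K ^ (1 / (1 - p)) := by
  have h1 : 0 < 1 - p := by linarith
  rw [← Real.log_le_log_iff hx (by positivity), Real.log_rpow hK]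
  have := Real.log_le_log hx h
  rw [Real.log_mul hK.ne' (by positivity), Real.log_rpow hx] at this
  rw [one_div, inv_mul_eq_div, le_div_iff₀ h1]
  linarith

lemma ge_of_self_ge {x K p : ℝ} (hx : 0 < x) (hK : 0 < K) (hp : p < 1) (h : K * x ^ p ≤ x) :
    K ^ (1 / (1 - p)) ≤ x := by
  have h1 : 0 < 1 - p := by linarith
  rw [← Real.log_le_log_iff (by positivity) hx, Real.log_rpow hK]
  have := Real.log_le_log (by positivity) h
  rw [Real.log_mul hK.ne' (by positivity), Real.log_rpow hx] at this
  rw [one_div, inv_mul_eq_div, div_le_iff₀ h1]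
  linarith

lemma end_A1 {p : ℝ} (hp : -(1/2) < p) (hp1 : p < 1) : ∃ c C : ℝ, 0 < c ∧ 0 < C ∧
    ∀ θ : ℝ, 0 < θ → θ ≤ 1 → ∀ g, Hump p θ g →
      c ≤ (∫ t in (0:ℝ)..1, ww t ^ 2 * g t) ∧ ∫ t in (0:ℝ)..1, g t ≤ C := by
  rcases le_total p 0 with hp0 | hp0
  · have hb : IntervalIntegrable (fun t : ℝ => t ^ (2 * p) * (1 - t) ^ p) volume 0 1 :=
      beta_int (by linarith) (by linarith)
    have hB : 0 < ∫ t in (0:ℝ)..1, t ^ (2 * p) * (1 - t) ^ p :=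
      intervalIntegral_pos_of_pos_on hb (fun t ht => mul_pos (Real.rpow_pos_of_pos ht.1 _)
        (Real.rpow_pos_of_pos (sub_pos.2 ht.2) _)) one_pos
    refine ⟨_, _, Real.exp_pos (-14), mul_pos (Real.exp_pos 15) hB, fun θ hθ hθ1 g h =>
      ⟨J_lower hθ hθ1 h hp0 (by linarith), ?_⟩⟩
    have := wt_le_J hθ h hp0 (w := fun _ => 1) continuous_const (fun t _ => zero_le_one) hb
      (fun t _ => by rw [one_mul])
    simp only [one_mul] at this
    exact this.trans (mul_le_mul_of_nonneg_right (J_rpow_le hθ hθ1 h hp0 (by linarith)) hB.le)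
  · have hbc : Continuous (fun t : ℝ => ww t ^ 2 * (t * ww t) ^ p) :=
      (ww_cont.pow 2).mul ((continuous_id.mul ww_cont).rpow_const fun _ => Or.inr hp0)
    have hB : 0 < ∫ t in (0:ℝ)..1, ww t ^ 2 * (t * ww t) ^ p :=
      intervalIntegral_pos_of_pos_on (hbc.intervalIntegrable _ _) (fun t ht =>
        mul_pos (pow_pos (ww_pos ht) 2) (Real.rpow_pos_of_pos (mul_pos ht.1 (ww_pos ht)) _)) one_pos
    set B := ∫ t in (0:ℝ)..1, ww t ^ 2 * (t * ww t) ^ p with hBdef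
    refine ⟨((1/2) ^ p * B) ^ (1 / (1 - p)), (2 ^ p) ^ (1 / (1 - p)), by positivity, by positivity,
      fun θ hθ hθ1 g h => ⟨ge_of_self_ge (J_pos h) (by positivity) hp1 ?_,
        le_of_self_le (I0_pos h) (by positivity) hp1 ?_⟩⟩
    · have hJ := J_pos h
      have hl := fun t (ht : t ∈ Ioo (0:ℝ) 1) => TT_lower2 hθ h.int h.pos (Ioo_subset_Icc_self ht)
      set J := ∫ t in (0:ℝ)..1, ww t ^ 2 * g t
      have e : (1/2) ^ p * B * J ^ p = ∫ t in (0:ℝ)..1, (J / 2) ^ p * (ww t ^ 2 * (t * ww t) ^ p) := by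
        rw [intervalIntegral.integral_const_mul, ← hBdef,
          show J / 2 = (1/2) * J by ring, Real.mul_rpow (by norm_num) hJ.le]
        ring
      rw [e]
      refine int_le ((hbc.intervalIntegrable _ _).const_mul _) (wg_int h.int (ww_cont.pow 2))
        fun t ht => ?_
      have htw : 0 < t * ww t := mul_pos ht.1 (ww_pos ht)
      have h1 := g_ge_pos h hp0 ht (by positivity) (hl t ht)
      rw [Real.mul_rpow (by positivity) htw.le] at h1
      have h2 := mul_le_mul_of_nonneg_left h1 (sq_nonneg (ww t))
      linarith
    · have hI0 := I0_pos h
      have hI1 := I1_pos h.int h.pos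
      have hle := I1_le_I0 h
      have hu := fun t (ht : t ∈ Ioo (0:ℝ) 1) =>
        TT_upper (θ := θ) h.int h.pos (Ioo_subset_Icc_self ht)
      rw [← Real.mul_rpow (by norm_num) hI0.le]
      have : ∫ t in (0:ℝ)..1, g t ≤ ∫ t in (0:ℝ)..1, (2 * ∫ t in (0:ℝ)..1, g t) ^ p := by
        refine int_le h.int intervalIntegrable_const fun t ht => ?_
        refine g_le_pos h hp0 ht ((hu t ht).trans ?_)
        have hw1 := ww_le_one (Ioo_subset_Icc_self ht)
        refine (mul_le_of_le_one_right (by positivity) hw1).trans ?_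
        exact mul_le_mul (by linarith) hle hI1.le (by norm_num)
      simpa using this

lemma end_A {p k : ℝ} (hp : -(1/2) < p) (hp1 : p < 1) (hk : 0 < k) : ∃ θ : ℝ, 0 < θ ∧
    ∀ g, Hump p θ g → 0 < (1 + ((θ + 1) / θ) ^ k) * ((∫ t in (0:ℝ)..1, (1 - t) ^ 2 * g t)
      - 2 * θ * ∫ t in (0:ℝ)..1, ww t * g t) - ∫ t in (0:ℝ)..1, g t := by
  obtain ⟨c, C, hc, hC, H⟩ := end_A1 hp hp1
  obtain ⟨A, hA⟩ := (tendsto_atTop_atTop.1 (tendsto_rpow_atTop hk)) (2 * C / c)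
  set R := max 1 (max (4 * C / c) A)
  have hR1 : 1 ≤ R := le_max_left _ _
  have hR2 : 4 * C / c ≤ R := (le_max_left _ _).trans (le_max_right _ _)
  have hR3 : A ≤ R := (le_max_right _ _).trans (le_max_right _ _)
  have hR0 : 0 < R := by linarith
  refine ⟨R⁻¹, by positivity, fun g h => ?_⟩
  obtain ⟨h1, h2⟩ := H R⁻¹ (by positivity) (inv_le_one_of_one_le₀ hR1) g h
  have e : (R⁻¹ + 1) / R⁻¹ = 1 + R := by field_simp
  rw [e]
  have h3 := hA (1 + R) (by linarith)
  have h4 := J_le_I2 h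
  have h5 := I1_le_I0 h
  have h6 := I1_pos h.int h.pos
  generalize (1 + R) ^ k = b at *
  generalize (∫ t in (0:ℝ)..1, (1 - t) ^ 2 * g t) = I2 at *
  generalize (∫ t in (0:ℝ)..1, ww t * g t) = I1 at *
  generalize (∫ t in (0:ℝ)..1, ww t ^ 2 * g t) = J at *
  generalize (∫ t in (0:ℝ)..1, g t) = I0 at *
  have k1 : 2 * R⁻¹ * I1 ≤ c / 2 := by
    rw [div_le_iff₀ hc] at hR2
    have : 2 * R⁻¹ * I1 ≤ 2 * R⁻¹ * C := mul_le_mul_of_nonneg_left (by linarith) (by positivity)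
    refine this.trans ?_
    rw [mul_right_comm, ← div_eq_mul_inv, div_le_iff₀ hR0]; linarith
  rw [div_le_iff₀ hc] at h3
  have hb : 0 < b := by nlinarith
  have k2 : (1 + b) * (c / 2) ≤ (1 + b) * (I2 - 2 * R⁻¹ * I1) :=
    mul_le_mul_of_nonneg_left (by linarith) (by linarith)
  nlinarith

lemma end_neg {p : ℝ} (hp : |p| < 1) : ∃ θ : ℝ, 0 < θ ∧
    ∀ g, Hump p θ g → ∀ b, 0 < b → (1 + b) * ((∫ t in (0:ℝ)..1, (1 - t) ^ 2 * g t)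
      - 2 * θ * ∫ t in (0:ℝ)..1, ww t * g t) - ∫ t in (0:ℝ)..1, g t < 0 := by
  obtain ⟨hpl, hpu⟩ := abs_lt.1 hp
  have hi := ww_int hpl
  have hi1 : IntervalIntegrable (fun t => ww t * ww t ^ p) volume 0 1 := wg_int hi ww_cont
  have hA : 0 < ∫ t in (0:ℝ)..1, ww t ^ p := intervalIntegral_pos_of_pos_on hi
    (fun t ht => Real.rpow_pos_of_pos (ww_pos ht) _) one_pos
  have hB : 0 < ∫ t in (0:ℝ)..1, ww t * ww t ^ p := intervalIntegral_pos_of_pos_on hi1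
    (fun t ht => mul_pos (ww_pos ht) (Real.rpow_pos_of_pos (ww_pos ht) _)) one_pos
  set A := ∫ t in (0:ℝ)..1, ww t ^ p with hAd
  set B := ∫ t in (0:ℝ)..1, ww t * ww t ^ p with hBd
  -- the two-sided bound
  have key : ∀ θ, 1 ≤ θ → ∀ g, Hump p θ g →
      B * (∫ t in (0:ℝ)..1, g t) ≤ 2 * A * ∫ t in (0:ℝ)..1, ww t * g t := by
    intro θ hθ g h
    have hI := I1_pos h.int h.pos
    obtain ⟨m, M, hm, hmM, hb⟩ : ∃ m M : ℝ, 0 < m ∧ M ≤ 2 * m ∧ ∀ t ∈ Ioo (0:ℝ) 1,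
        m * ww t ^ p ≤ g t ∧ g t ≤ M * ww t ^ p := by
      have hl := fun t (ht : t ∈ Ioo (0:ℝ) 1) =>
        TT_lower (θ := θ) h.int h.pos (Ioo_subset_Icc_self ht)
      have hu := fun t (ht : t ∈ Ioo (0:ℝ) 1) =>
        TT_upper (θ := θ) h.int h.pos (Ioo_subset_Icc_self ht)
      set I := ∫ t in (0:ℝ)..1, ww t * g t
      set U := θ * I with hU
      have hU0 : 0 < U := by positivity
      have hu' : ∀ t ∈ Ioo (0:ℝ) 1, TT θ g t ≤ 2 * U * ww t := fun t ht => (hu t ht).trans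
        (mul_le_mul_of_nonneg_right (by rw [hU]; nlinarith) (ww_pos ht).le)
      rcases le_total p 0 with hp0 | hp0
      · refine ⟨(2 * U) ^ p, U ^ p, by positivity, ?_, fun t ht => ?_⟩
        · rw [Real.mul_rpow (by norm_num) hU0.le, ← mul_assoc]
          refine le_mul_of_one_le_left (by positivity) ?_
          have : (2:ℝ) ^ (-1:ℝ) ≤ 2 ^ p := Real.rpow_le_rpow_of_exponent_le (by norm_num) hpl.le
          rw [Real.rpow_neg_one] at this
          linarith
        · have hw := ww_pos ht
          rw [← Real.mul_rpow (by positivity) hw.le, ← Real.mul_rpow (by positivity) hw.le]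
          exact ⟨g_ge_neg h hp0 ht (hu' t ht), g_le_neg h hp0 ht (by positivity) (hl t ht)⟩
      · refine ⟨U ^ p, (2 * U) ^ p, by positivity, ?_, fun t ht => ?_⟩
        · rw [Real.mul_rpow (by norm_num) hU0.le]
          refine mul_le_mul_of_nonneg_right ?_ (by positivity)
          have : (2:ℝ) ^ p ≤ 2 ^ (1:ℝ) := Real.rpow_le_rpow_of_exponent_le (by norm_num) hpu.le
          simpa using this
        · have hw := ww_pos ht
          rw [← Real.mul_rpow (by positivity) hw.le, ← Real.mul_rpow (by positivity) hw.le]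
          exact ⟨g_ge_pos h hp0 ht (by positivity) (hl t ht), g_le_pos h hp0 ht (hu' t ht)⟩
    have u0 : ∫ t in (0:ℝ)..1, g t ≤ M * A := by
      rw [hAd, ← intervalIntegral.integral_const_mul]
      exact int_le h.int (hi.const_mul _) fun t ht => (hb t ht).2
    have l1 : m * B ≤ ∫ t in (0:ℝ)..1, ww t * g t := by
      rw [hBd, ← intervalIntegral.integral_const_mul]
      refine int_le (hi1.const_mul _) (wg_int h.int ww_cont) fun t ht => ?_
      have := mul_le_mul_of_nonneg_left (hb t ht).1 (ww_pos ht).le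
      linarith
    calc B * (∫ t in (0:ℝ)..1, g t) ≤ B * (2 * m * A) :=
          mul_le_mul_of_nonneg_left (u0.trans (mul_le_mul_of_nonneg_right hmM hA.le)) hB.le
      _ = 2 * A * (m * B) := by ring
      _ ≤ _ := mul_le_mul_of_nonneg_left l1 (by positivity)
  refine ⟨max 1 (A / B), by positivity, fun g h b hb => ?_⟩
  have k := key _ (le_max_left _ _) g h
  have h1 : A / B ≤ max 1 (A / B) := le_max_right _ _
  generalize max 1 (A / B) = θ at *
  have h2 := I2_le_I0 h
  have h3 := I0_pos h
  have h4 := I1_pos h.int h.pos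
  generalize (∫ t in (0:ℝ)..1, (1 - t) ^ 2 * g t) = I2 at *
  generalize (∫ t in (0:ℝ)..1, ww t * g t) = I1 at *
  generalize (∫ t in (0:ℝ)..1, g t) = I0 at *
  have h5 : I0 ≤ 2 * θ * I1 := by
    have : I0 ≤ 2 * (A / B) * I1 := by
      rw [mul_div_assoc', div_mul_eq_mul_div, le_div_iff₀ hB]; linarith
    refine this.trans ?_
    have := mul_le_mul_of_nonneg_right h1 h4.le
    linarith
  have : (1 + b) * (I2 - 2 * θ * I1) ≤ 0 :=
    mul_nonpos_of_nonneg_of_nonpos (by linarith) (by linarith)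
  linarith

lemma cont_of_exp_bound {f : ℝ → ℝ} {C : ℝ}
    (hf : ∀ l l', f l ≤ Real.exp (C * |l - l'|) * f l') : Continuous f := by
  rw [continuous_iff_continuousAt]
  intro l
  have e1 : Tendsto (fun l' => Real.exp (C * |l' - l|) * f l) (𝓝 l) (𝓝 (f l)) := by
    have : Continuous fun l' => Real.exp (C * |l' - l|) * f l := by fun_prop
    simpa using this.tendsto l
  have e2 : Tendsto (fun l' => Real.exp (-(C * |l' - l|)) * f l) (𝓝 l) (𝓝 (f l)) := by
    have : Continuous fun l' => Real.exp (-(C * |l' - l|)) * f l := by fun_prop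
    simpa using this.tendsto l
  refine tendsto_of_tendsto_of_tendsto_of_le_of_le e2 e1 (fun l' => ?_) (fun l' => hf l' l)
  have := mul_le_mul_of_nonneg_left (hf l l') (Real.exp_pos (-(C * |l' - l|))).le
  rw [← mul_assoc, ← Real.exp_add, abs_sub_comm l l', neg_add_cancel, Real.exp_zero, one_mul] at this
  exact this

lemma wt_continuous {G : ℝ → ℝ → ℝ} {C : ℝ} (hi : ∀ l, IntervalIntegrable (G l) volume 0 1)
    (hG : ∀ l l', ∀ t ∈ Ioo (0:ℝ) 1, G l t ≤ Real.exp (C * |l - l'|) * G l' t)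
    {w : ℝ → ℝ} (hw : Continuous w) (hw0 : ∀ t ∈ Ioo (0:ℝ) 1, 0 ≤ w t) :
    Continuous fun l => ∫ t in (0:ℝ)..1, w t * G l t := by
  refine cont_of_exp_bound (C := C) fun l l' => ?_
  rw [← intervalIntegral.integral_const_mul]
  refine int_le (wg_int (hi l) hw) ((wg_int (hi l') hw).const_mul _) fun t ht => ?_
  have := mul_le_mul_of_nonneg_left (hG l l' t ht) (hw0 t ht)
  linarith

lemma exists_zero {p k : ℝ} (hp : |p| < 1) (hpos : ∃ θ : ℝ, 0 < θ ∧
    ∀ g, Hump p θ g → 0 < (1 + ((θ + 1) / θ) ^ k) * ((∫ t in (0:ℝ)..1, (1 - t) ^ 2 * g t)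
      - 2 * θ * ∫ t in (0:ℝ)..1, ww t * g t) - ∫ t in (0:ℝ)..1, g t) :
    ∃ θ g, 0 < θ ∧ Hump p θ g ∧ (1 + ((θ + 1) / θ) ^ k) * ((∫ t in (0:ℝ)..1, (1 - t) ^ 2 * g t)
      - 2 * θ * ∫ t in (0:ℝ)..1, ww t * g t) - (∫ t in (0:ℝ)..1, g t) = 0 := by
  obtain ⟨θ₂, hθ₂, H2⟩ := hpos
  obtain ⟨θ₁, hθ₁, H1⟩ := end_neg hp
  obtain ⟨G, C, hG, hC⟩ := exists_humps hp
  have c2 := wt_continuous (fun l => (hG l).int) hC (w := fun t => (1 - t) ^ 2) (by fun_prop)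
    (fun t _ => sq_nonneg _)
  have c1 := wt_continuous (fun l => (hG l).int) hC ww_cont (fun t ht => (ww_pos ht).le)
  have c0 := wt_continuous (fun l => (hG l).int) hC (w := fun _ => 1) continuous_const
    (fun _ _ => zero_le_one)
  simp only [one_mul] at c0
  have hcont : Continuous fun l => (1 + ((Real.exp l + 1) / Real.exp l) ^ k) *
      ((∫ t in (0:ℝ)..1, (1 - t) ^ 2 * G l t)
      - 2 * Real.exp l * ∫ t in (0:ℝ)..1, ww t * G l t) - ∫ t in (0:ℝ)..1, G l t := by
    have cr : Continuous fun l => ((Real.exp l + 1) / Real.exp l) ^ k := by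
      refine Continuous.rpow_const ?_ fun l => Or.inl ?_
      · exact (Real.continuous_exp.add continuous_const).div Real.continuous_exp
          fun l => (Real.exp_pos l).ne'
      · have := Real.exp_pos l
        positivity
    have ce := Real.continuous_exp
    exact ((continuous_const.add cr).mul (c2.sub ((continuous_const.mul ce).mul c1))).sub c0
  obtain ⟨l, hl⟩ := mem_range_of_exists_le_of_exists_ge hcont (c := 0)
    ⟨Real.log θ₁, by
      have h := hG (Real.log θ₁)
      rw [Real.exp_log hθ₁] at h
      simp only [Real.exp_log hθ₁]
      exact (H1 _ h _ (by positivity)).le⟩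
    ⟨Real.log θ₂, by
      have h := hG (Real.log θ₂)
      rw [Real.exp_log hθ₂] at h
      simp only [Real.exp_log hθ₂]
      exact (H2 _ h).le⟩
  exact ⟨Real.exp l, G l, Real.exp_pos l, hG l, hl⟩

lemma osc_of_pos {n : ℝ} (hn : 0 < n) (hn2 : n < 2) (hpos : ∃ θ : ℝ, 0 < θ ∧
    ∀ g, Hump (1 - n) θ g → 0 < (1 + ((θ + 1) / θ) ^ ((3 - 2 * n) / (3 - n))) *
      ((∫ t in (0:ℝ)..1, (1 - t) ^ 2 * g t)
      - 2 * θ * ∫ t in (0:ℝ)..1, ww t * g t) - ∫ t in (0:ℝ)..1, g t) :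
    ∃ (φ : ℝ → ℝ) (T : ℝ), 0 < T ∧ IsOscSol n φ ∧ Function.Periodic φ T ∧
          (∃ s, 0 < φ s) ∧ (∃ s, φ s < 0) := by
  obtain ⟨θ, g, hθ, hg, hz⟩ := exists_zero (abs_lt.2 ⟨by linarith, by linarith⟩) hpos
  have h3n : 0 < 3 / n - 1 := by
    rw [sub_pos, lt_div_iff₀ hn]; linarith
  have h3n' : 0 < 3 - n := by linarith
  have ha : 1 < (θ + 1) / θ := by rw [lt_div_iff₀ hθ]; linarith
  set a := (θ + 1) / θ with had
  have haθ : a * θ = θ + 1 := div_mul_cancel₀ _ hθ.ne'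
  have e1 : (3 / n - 1) * (Real.log a / (3 / n - 1)) = Real.log a := by field_simp
  have e2 : (3 / n - 2) * (Real.log a / (3 / n - 1)) = Real.log a * ((3 - 2 * n) / (3 - n)) := by
    have : 3 / n - 1 = (3 - n) / n := by field_simp
    have h' : 3 / n - 2 = (3 - 2 * n) / n := by field_simp
    rw [this, h']; field_simp
  have ha0 : 0 < a := by linarith
  refine hump_glue hn (τ := Real.log a / (3 / n - 1)) (div_pos (Real.log_pos ha) h3n) hg ?_ ?_
  · rw [e1, Real.exp_log ha0, haθ]
  · rw [e2, ← Real.rpow_def_of_pos ha0]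
    linarith

end OscHelpers

/-- There is a number `n_h ∈ (3/2, 9/(3+√3))` such that for every `n ∈ (0, n_h)` the
oscillatory-component equation admits a nonconstant periodic solution of changing
sign. -/
theorem exists_heteroclinic_threshold :
    ∃ nh : ℝ, 3 / 2 < nh ∧ nh < 9 / (3 + Real.sqrt 3) ∧
      ∀ n : ℝ, n ∈ Set.Ioo (0 : ℝ) nh →
        ∃ (φ : ℝ → ℝ) (T : ℝ), 0 < T ∧ IsOscSol n φ ∧ Function.Periodic φ T ∧
          (∃ s, 0 < φ s) ∧ (∃ s, φ s < 0) := by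
  obtain ⟨θ, hθ, hB⟩ := end_B
  have ha : 1 < (θ + 1) / θ := by rw [lt_div_iff₀ hθ]; linarith
  have hL : 0 < Real.log ((θ + 1) / θ) := Real.log_pos ha
  have ha0 : 0 < (θ + 1) / θ := by linarith
  refine ⟨min (7 / 4) (3 / 2 + 1 / (4 * Real.log ((θ + 1) / θ))), ?_, ?_, ?_⟩
  · refine lt_min (by norm_num) ?_
    have : 0 < 1 / (4 * Real.log ((θ + 1) / θ)) := by positivity
    linarith
  · refine (min_le_left _ _).trans_lt ?_
    have : Real.sqrt 3 < 2 := by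
      rw [Real.sqrt_lt' (by norm_num)]; norm_num
    have h0 := Real.sqrt_nonneg 3
    rw [lt_div_iff₀ (by linarith)]
    linarith
  · rintro n ⟨hn, hnh⟩
    have h1 : n < 7 / 4 := hnh.trans_le (min_le_left _ _)
    have h2 : n < 3 / 2 + 1 / (4 * Real.log ((θ + 1) / θ)) := hnh.trans_le (min_le_right _ _)
    refine osc_of_pos hn (by linarith) ?_
    rcases lt_or_ge n (3 / 2) with h | h
    · exact end_A (by linarith) (by linarith) (div_pos (by linarith) (by linarith))
    · refine ⟨θ, hθ, fun g hg => hB _ _ (by linarith) (by linarith) ?_ ?_ g hg⟩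
      · rw [Real.rpow_def_of_pos ha0]
        generalize Real.log ((θ + 1) / θ) = L at *
        have h3 : L * (2 * n - 3) ≤ 1 / 2 := by
          have : n - 3 / 2 < 1 / (4 * L) := by linarith
          rw [lt_div_iff₀ (by positivity)] at this
          linarith
        have h4 : -(1 / 2) ≤ L * ((3 - 2 * n) / (3 - n)) := by
          rw [mul_div_assoc', le_div_iff₀ (by linarith)]
          linarith
        have := Real.add_one_le_exp (L * ((3 - 2 * n) / (3 - n)))
        linarith
      · exact Real.rpow_le_one_of_one_le_of_nonpos ha.le
          (div_nonpos_of_nonpos_of_nonneg (by linarith) (by linarith))
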